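/- Let (A, φ) be a noncommutative probability space with monotone cumulants {h_n}. Then for every n ≥ 1 and all a_1,…,a_n ∈ A one has h_n(a_1,…,a_n) = Σ_{t ∈ ST(n)} ω(sk(t)) · φ_{π(t)}(a_1,…,a_n). -/

import Mathlib

open scoped BigOperators

/-- Planar rooted trees (rose trees). -/
inductive PTree : Type
  | node : List PTree → PTree

namespace PTree

/-- The single-vertex tree (a leaf). -/
abbrev leaf : PTree := .node []

/-- Subtree at a given path from the root (entries select children). -/
def subtreeAt : List ℕ → PTree → Option PTree
  | [], t => some t
  | i :: p, node cs => (cs[i]?).bind (subtreeAt p)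

/-- `p` is (the path of) a vertex of `t`. -/
def IsVertex (t : PTree) (p : List ℕ) : Prop := (subtreeAt p t).isSome

/-- `p` is a leaf of `t`. -/
def IsLeafAt (t : PTree) (p : List ℕ) : Prop := subtreeAt p t = some leaf

/-- `p` is an internal (non-leaf) vertex of `t`. -/
def IsInternalAt (t : PTree) (p : List ℕ) : Prop :=
  ∃ cs, subtreeAt p t = some (node cs) ∧ cs ≠ []

/-- Schröder trees: every internal vertex has at least two children. -/
inductive IsSchroder : PTree → Prop
  | leaf : IsSchroder (node [])
  | node (cs : List PTree) : 2 ≤ cs.length → (∀ c ∈ cs, IsSchroder c) → IsSchroder (node cs)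

/-- Number of leaves of a tree. -/
noncomputable def numLeaves (t : PTree) : ℕ := Nat.card {p : List ℕ // IsLeafAt t p}

/-- Number of sectors between consecutive leaves. -/
noncomputable def numSectors (t : PTree) : ℕ := numLeaves t - 1

/-- Number of internal vertices. -/
noncomputable def numInternal (t : PTree) : ℕ := Nat.card {p : List ℕ // IsInternalAt t p}

/-- The set of Schröder trees with `n+1` leaves. -/
def ST (n : ℕ) : Set PTree := {t | IsSchroder t ∧ numLeaves t = n + 1}

/-- Number of surjective strictly order-preserving maps from the poset of internal
vertices of `t` (i.e. the vertex poset of the skeleton `sk(t)`, with the root minimal,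
the order being the ancestor/prefix order) onto `{1, …, k}`. This is `ω_k(sk(t))`. -/
noncomputable def omegaSkK (t : PTree) (k : ℕ) : ℕ :=
  Nat.card {f : {p : List ℕ // IsInternalAt t p} → Fin k //
    Function.Surjective f ∧ ∀ v w, v.1 <+: w.1 → v ≠ w → f v < f w}

/-- The Murua coefficient `ω(sk(t))` of the skeleton of `t`. -/
noncomputable def omegaSk (t : PTree) : ℂ :=
  ∑ k ∈ Finset.Icc 1 (numInternal t), ((-1 : ℂ) ^ (k + 1) / (k : ℂ)) * (omegaSkK t k : ℂ)

/-- The subtree of `t` at path `p` (junk value: a leaf). -/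
noncomputable def subtree! (t : PTree) (p : List ℕ) : PTree := (subtreeAt p t).getD leaf

/-- Number of leaves of `t` strictly to the left of the subtree at `p`. -/
noncomputable def leavesBefore (t : PTree) (p : List ℕ) : ℕ :=
  Nat.card {q : List ℕ // IsLeafAt t q ∧ List.Lex (· < ·) q p ∧ ¬ p <+: q}

/-- Sector number `i` (0-indexed: the sector between the `(i+1)`-st and `(i+2)`-nd leaves of `t`)
lies strictly inside the subtree of `t` rooted at `p`. -/
def SectorIn (t : PTree) (p : List ℕ) (i : ℕ) : Prop :=
  leavesBefore t p ≤ i ∧ i + 2 ≤ leavesBefore t p + numLeaves (subtree! t p)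

/-- The internal vertex `v` of `t` owns sector `i`: the sector lies in the corolla at `v`,
i.e. inside the subtree at `v` but not inside the subtree at any strictly deeper vertex. -/
def OwnsSector (t : PTree) (v : List ℕ) (i : ℕ) : Prop :=
  IsInternalAt t v ∧ SectorIn t v i ∧
    ∀ w, IsInternalAt t w → v <+: w → w ≠ v → ¬ SectorIn t w i

/-- Sectors `i` and `j` belong to the same block of the noncrossing partition `π(t)`. -/
def SameOwner (t : PTree) (i j : ℕ) : Prop := ∃ v, OwnsSector t v i ∧ OwnsSector t v j

open Classical in
/-- `φ_{π(t)}(a_1,…,a_n)`: the product over the blocks of the noncrossing partition `π(t)`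
(one block per internal vertex `v`, consisting of the sectors owned by `v`) of `φ` applied to
the ordered product of the corresponding letters of `w`. -/
noncomputable def phiPi {A : Type*} [Ring A] (φ : A → ℂ) (t : PTree) (w : List A) : ℂ :=
  ∏ᶠ v ∈ {v : List ℕ | IsInternalAt t v},
    φ ((((List.range w.length).filter fun i => OwnsSector t v i).map fun i => w.getD i 0).prod)

/-- A corolla: a root whose (at least two) children are all leaves. -/
def corolla (m : ℕ) : PTree := node (List.replicate m leaf)

/-- `t` is a corolla. -/
def IsCorolla (t : PTree) : Prop := ∃ m, 2 ≤ m ∧ t = corolla m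

/-- Graft a tree `s` onto the leftmost leaf of `t`. -/
def graftLeftmost : PTree → PTree → PTree
  | node [], s => s
  | node (c :: cs), s => node (graftLeftmost c s :: cs)

/-- Trees obtained from the single-vertex tree by repeatedly grafting a corolla
onto the leftmost leaf. -/
inductive IsBST : PTree → Prop
  | single : IsBST leaf
  | graft (t : PTree) (m : ℕ) : IsBST t → 2 ≤ m → IsBST (graftLeftmost t (corolla m))

/-- Schröder trees whose leftmost child of the root is a leaf. -/
def IsPST (t : PTree) : Prop := ∃ cs, t = node (leaf :: cs)

end PTree
section Partitions

open scoped BigOperators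

/-- Set partitions of `[n] = {1,…,n}`, modeled as finpartitions of `Fin n`. -/
abbrev NPart (n : ℕ) := Finpartition (Finset.univ : Finset (Fin n))

/-- Noncrossing partitions: there are no `a < b < c < d` with `a, c` in one block and
`b, d` in a different block. -/
def IsNoncrossing {n : ℕ} (π : NPart n) : Prop :=
  ∀ a b c d : Fin n, a < b → b < c → c < d →
    ∀ V ∈ π.parts, ∀ W ∈ π.parts, a ∈ V → c ∈ V → b ∈ W → d ∈ W → V = W

/-- Interval partitions: every block is an interval of consecutive elements. -/
def IsIntervalPart {n : ℕ} (π : NPart n) : Prop :=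
  ∀ V ∈ π.parts, ∀ x ∈ V, ∀ y ∈ V, ∀ z : Fin n, x ≤ z → z ≤ y → z ∈ V

/-- Irreducible noncrossing partitions: `1` and `n` lie in the same block. -/
def IsIrreducibleNC {n : ℕ} (π : NPart n) : Prop :=
  ∃ V ∈ π.parts, (∀ i : Fin n, i.val = 0 → i ∈ V) ∧ (∀ i : Fin n, i.val = n - 1 → i ∈ V)

/-- `W` is nested in `V`: every element of `W` lies in the interval `[min V, max V]`. -/
def NestedIn {n : ℕ} (W V : Finset (Fin n)) : Prop :=
  ∀ w ∈ W, (∃ a ∈ V, a ≤ w) ∧ (∃ b ∈ V, w ≤ b)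

open Classical in
/-- The forest factorial `t(π)!` of the forest of nestings of `π`: the product, over all
blocks `V`, of the number of blocks nested in `V` (the size of the subtree rooted at `V`). -/
noncomputable def forestFactorial {n : ℕ} (π : NPart n) : ℕ :=
  ∏ V ∈ π.parts, (π.parts.filter fun W => NestedIn W V).card

/-- `f_π(a_1,…,a_n)`: the product over the blocks `V = {i_1 < … < i_s}` of `π` of
`f(a_{i_1},…,a_{i_s})`, for a family of multilinear functionals encoded as `f : List A → ℂ`. -/
noncomputable def blockApply {A : Type*} {n : ℕ} (f : List A → ℂ) (a : Fin n → A)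
    (π : NPart n) : ℂ :=
  ∏ V ∈ π.parts, f ((V.sort (· ≤ ·)).map a)

/-- `φ_π(a_1,…,a_n)` for the moment functionals `φ_m(a_1,…,a_m) = φ(a_1 ⋯ a_m)`. -/
noncomputable def momApply {A : Type*} [Ring A] {n : ℕ} (φ : A → ℂ) (a : Fin n → A)
    (π : NPart n) : ℂ :=
  blockApply (fun l => φ l.prod) a π

/-- `ω_k(t(π))` for the nesting poset of the blocks of `π` (for irreducible `π`, this is
the vertex poset of the tree of nestings, rooted at the outermost block): the number of
surjective strictly order-preserving maps onto `{1,…,k}`. -/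
noncomputable def omegaNestK {n : ℕ} (π : NPart n) (k : ℕ) : ℕ :=
  Nat.card {f : {V // V ∈ π.parts} → Fin k // Function.Surjective f ∧
    ∀ V W : {V // V ∈ π.parts}, NestedIn W.1 V.1 → V ≠ W → f V < f W}

/-- The Murua coefficient `ω(t(π))` of the tree (forest) of nestings of `π`. -/
noncomputable def omegaNest {n : ℕ} (π : NPart n) : ℂ :=
  ∑ k ∈ Finset.Icc 1 π.parts.card, ((-1 : ℂ) ^ (k + 1) / (k : ℂ)) * (omegaNestK π k : ℂ)

/-- The noncrossing partition `π(t)` associated to a Schröder tree `t ∈ ST(n)` equals `π`: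
two sectors lie in the same block of `π(t)` (i.e. have the same owning internal vertex)
iff they lie in the same block of `π`. -/
def TreePartEq {n : ℕ} (t : PTree) (π : NPart n) : Prop :=
  ∀ i j : Fin n, PTree.SameOwner t i.val j.val ↔ ∃ V ∈ π.parts, i ∈ V ∧ j ∈ V

/-- The moment–cumulant relation defining the monotone cumulants `h`. -/
def MonotoneMC {A : Type*} [Ring A] (φ : A → ℂ) (h : List A → ℂ) : Prop :=
  ∀ (m : ℕ), 1 ≤ m → ∀ a : Fin m → A,
    φ (List.ofFn a).prod =
      ∑ᶠ π ∈ {π : NPart m | IsNoncrossing π}, (forestFactorial π : ℂ)⁻¹ * blockApply h a π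

/-- The moment–cumulant relation defining the free cumulants `r`. -/
def FreeMC {A : Type*} [Ring A] (φ : A → ℂ) (r : List A → ℂ) : Prop :=
  ∀ (m : ℕ), 1 ≤ m → ∀ a : Fin m → A,
    φ (List.ofFn a).prod = ∑ᶠ π ∈ {π : NPart m | IsNoncrossing π}, blockApply r a π

/-- The moment–cumulant relation defining the Boolean cumulants `b`. -/
def BooleanMC {A : Type*} [Ring A] (φ : A → ℂ) (b : List A → ℂ) : Prop :=
  ∀ (m : ℕ), 1 ≤ m → ∀ a : Fin m → A,
    φ (List.ofFn a).prod = ∑ᶠ π ∈ {π : NPart m | IsIntervalPart π}, blockApply b a π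

end Partitions

section GapConvolution

open Polynomial

/-- The sum over all ways to write `w = g₀ s₁ g₁ s₂ ⋯ s_k g_k` with letters `s_i` and gap words
`g_i` of `F (s₁ ⋯ s_k) * G₀ g₀ * G g₁ * ⋯ * G g_k`. -/
def gapSum {A R : Type*} [CommSemiring R] (G : List A → R) :
    (List A → R) → (List A → R) → List A → R
  | F, G₀, [] => F [] * G₀ []
  | F, G₀, a :: w =>
      gapSum G F (fun u => G₀ (a :: u)) w + G₀ [] * gapSum G (fun u => F (a :: u)) G w

/-- The convolution of functionals on words: letters are fed to `F`, gaps to `G`. -/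
def gapConv {A R : Type*} [CommSemiring R] (F G : List A → R) : List A → R := gapSum G F G

variable {A R : Type*} [CommSemiring R]

theorem gapSum_add_letters (G : List A → R) (w : List A) (F F' G₀ : List A → R) :
    gapSum G (fun u => F u + F' u) G₀ w = gapSum G F G₀ w + gapSum G F' G₀ w := by
  induction w generalizing F F' G₀ with
  | nil => simp [gapSum, add_mul]
  | cons a w ih => simp only [gapSum, ih]; ring

theorem gapSum_mul_letters (G : List A → R) (w : List A) (c : R) (F G₀ : List A → R) :
    gapSum G (fun u => c * F u) G₀ w = c * gapSum G F G₀ w := by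
  induction w generalizing F G₀ with
  | nil => simp [gapSum, mul_assoc]
  | cons a w ih => simp only [gapSum, ih]; ring

theorem gapSum_add_gap (G : List A → R) (w : List A) (F G₀ G₀' : List A → R) :
    gapSum G F (fun u => G₀ u + G₀' u) w = gapSum G F G₀ w + gapSum G F G₀' w := by
  induction w generalizing F G₀ G₀' with
  | nil => simp [gapSum, mul_add]
  | cons a w ih => simp only [gapSum, ih]; ring

theorem gapSum_mul_gap (G : List A → R) (w : List A) (c : R) (F G₀ : List A → R) :
    gapSum G F (fun u => c * G₀ u) w = c * gapSum G F G₀ w := by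
  induction w generalizing F G₀ with
  | nil => simp [gapSum, mul_left_comm]
  | cons a w ih => simp only [gapSum, ih]; ring

theorem gapSum_assoc (G H : List A → R) (w : List A) (F G₀ H₀ : List A → R) :
    gapSum G (gapSum H F H₀) G₀ w =
      gapSum (gapSum G H G) F (gapSum G H₀ G₀) w := by
  induction w generalizing F G₀ H₀ with
  | nil => simp [gapSum, mul_assoc]
  | cons a w ih =>
    simp only [gapSum, gapSum_add_letters, gapSum_mul_letters, gapSum_add_gap, gapSum_mul_gap, ih]
    ring

theorem gapConv_assoc (F H G : List A → R) (w : List A) :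
    gapConv (gapConv F H) G w = gapConv F (gapConv H G) w :=
  gapSum_assoc G H w F G H

theorem gapSum_congr (w : List A) {G G' : List A → R} (F : List A → R) {G₀ G₀' : List A → R}
    (h₀ : ∀ v : List A, v.length ≤ w.length → G₀ v = G₀' v)
    (h : ∀ v : List A, v.length < w.length → G v = G' v) :
    gapSum G F G₀ w = gapSum G' F G₀' w := by
  induction w generalizing F G₀ G₀' with
  | nil => simp [gapSum, h₀]
  | cons a w ih =>
    simp only [gapSum, h₀ [] (by simp)]
    rw [ih F (fun v hv => h₀ (a :: v) (by simpa using hv)) (fun v hv => h v (by simp; omega)),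
      ih _ (fun v hv => h v (by simp; omega)) (fun v hv => h v (by simp; omega))]

theorem gapSum_congr_of_apply_nil (w : List A) {G G' : List A → R} {F : List A → R}
    {G₀ G₀' : List A → R} (hF : F [] = 0)
    (h₀ : ∀ v : List A, v.length < w.length → G₀ v = G₀' v)
    (h : ∀ v : List A, v.length < w.length → G v = G' v) :
    gapSum G F G₀ w = gapSum G' F G₀' w := by
  induction w generalizing G₀ G₀' with
  | nil => simp [gapSum, hF]
  | cons a w ih =>
    simp only [gapSum, h₀ [] (by simp)]
    rw [ih (fun v hv => h₀ (a :: v) (by simpa using hv)) (fun v hv => h v (by simp; omega)),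
      gapSum_congr w (fun u => F (a :: u)) (G₀ := G) (G₀' := G') (G := G) (G' := G')
        (fun v hv => h v (by simp; omega)) (fun v hv => h v (by simp; omega))]

theorem gapConv_congr_of_apply_nil (w : List A) {G G' F : List A → R} (hF : F [] = 0)
    (h : ∀ v : List A, v.length < w.length → G v = G' v) :
    gapConv F G w = gapConv F G' w :=
  gapSum_congr_of_apply_nil w hF h h

theorem map_gapSum {S : Type*} [CommSemiring S] (f : R →+* S) (G : List A → R) (w : List A)
    (F G₀ : List A → R) :
    f (gapSum G F G₀ w) = gapSum (fun u => f (G u)) (fun u => f (F u)) (fun u => f (G₀ u)) w := by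
  induction w generalizing F G₀ with
  | nil => simp [gapSum]
  | cons a w ih => simp [gapSum, ih]

theorem map_gapConv {S : Type*} [CommSemiring S] (f : R →+* S) (F G : List A → R) (w : List A) :
    f (gapConv F G w) = gapConv (fun u => f (F u)) (fun u => f (G u)) w :=
  map_gapSum f G w F G

/-- The unit of the convolution: the indicator of the empty word. -/
def emptyWord {A R : Type*} [CommSemiring R] : List A → R
  | [] => 1
  | _ :: _ => 0

theorem gapSum_of_gap_eq_zero (G : List A → R) (w : List A) (F G₀ : List A → R)
    (h : ∀ u, G₀ u = 0) : gapSum G F G₀ w = 0 := by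
  induction w generalizing F G₀ with
  | nil => simp [gapSum, h]
  | cons a w ih => rw [gapSum, ih _ _ fun u => h _, h, zero_mul, add_zero]

theorem gapSum_of_letters_eq_zero (G : List A → R) (w : List A) (F G₀ : List A → R)
    (h : ∀ u, F u = 0) : gapSum G F G₀ w = 0 := by
  induction w generalizing F G₀ with
  | nil => simp [gapSum, h]
  | cons a w ih => simp [gapSum, ih F _ h, ih (fun u => F (a :: u)) G fun u => h _]

theorem gapConv_emptyWord (F : List A → R) (w : List A) : gapConv F emptyWord w = F w := by
  induction w generalizing F with
  | nil => simp [gapConv, gapSum, emptyWord]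
  | cons a w ih =>
    have := ih fun u => F (a :: u)
    simp only [gapConv] at this
    simp [gapConv, gapSum, emptyWord, this, gapSum_of_gap_eq_zero]

theorem gapSum_emptyWord_letters (G : List A → R) (w : List A) (G₀ : List A → R) :
    gapSum G emptyWord G₀ w = G₀ w := by
  induction w generalizing G₀ with
  | nil => simp [gapSum, emptyWord]
  | cons a w ih => simp [gapSum, ih, gapSum_of_letters_eq_zero, emptyWord]

theorem emptyWord_gapConv (G : List A → R) (w : List A) : gapConv emptyWord G w = G w :=
  gapSum_emptyWord_letters G w G

theorem gapSum_append_eq (G : List A → R) (w : List A) (F G₀ : List A → R) :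
    gapSum G F G₀ w = F [] * G₀ w + ∑ j ∈ Finset.range w.length,
      G₀ (w.take j) * gapConv (fun u => F ((w.drop j).take 1 ++ u)) G (w.drop (j + 1)) := by
  induction w generalizing F G₀ with
  | nil => simp [gapSum]
  | cons a w ih =>
    rw [gapSum, ih, List.length_cons, Finset.sum_range_succ']
    simp [gapConv, add_assoc]

theorem derivative_gapSum (G : List A → ℂ) (w : List A) (F : List A → ℂ[X]) (G₀ : List A → ℂ) :
    derivative (gapSum (fun u => C (G u)) F (fun u => C (G₀ u)) w) =
      gapSum (fun u => C (G u)) (fun u => derivative (F u)) (fun u => C (G₀ u)) w := by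
  induction w generalizing F G₀ with
  | nil => simp [gapSum, mul_comm]
  | cons a w ih => 
    simp only [gapSum, derivative_add, derivative_mul, ih, derivative_C, zero_mul, zero_add]

theorem eq_of_derivative_eq {p q : ℂ[X]} (h : derivative p = derivative q)
    (h₀ : p.eval 0 = q.eval 0) : p = q := by
  have h1 : derivative (p - q) = 0 := by simp [h]
  obtain ⟨c, hc⟩ : ∃ c, p - q = C c := ⟨_, eq_C_of_derivative_eq_zero h1⟩
  have : c = 0 := by
    have := congrArg (eval 0) hc
    simpa [h₀] using this.symm
  rw [this, C_0] at hc
  exact sub_eq_zero.1 hc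

theorem exists_derivative_eq (p : ℂ[X]) : ∃ q : ℂ[X], derivative q = p ∧ q.eval 0 = 0 := by
  induction p using Polynomial.induction_on' with
  | add p q hp hq =>
    obtain ⟨p', hp, hp0⟩ := hp
    obtain ⟨q', hq, hq0⟩ := hq
    exact ⟨p' + q', by simp [hp, hq], by simp [hp0, hq0]⟩
  | monomial n c =>
    refine ⟨monomial (n + 1) (c / (n + 1)), ?_, by simp [eval_monomial]⟩
    rw [derivative_monomial]
    have : (n : ℂ) + 1 ≠ 0 := by exact_mod_cast n.succ_ne_zero
    simp [this]

/-- `M` is the one-parameter convolution semigroup generated by `H`. -/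
structure IsGeneratedBy (H : List A → ℂ) (M : List A → ℂ[X]) : Prop where
  nil : M [] = 1
  eval_zero : ∀ w, w ≠ [] → (M w).eval 0 = 0
  derivative_eq : ∀ w, derivative (M w) = gapConv (fun u => C (H u)) M w

theorem exists_isGeneratedBy (H : List A → ℂ) (hH : H [] = 0) :
    ∃ M, IsGeneratedBy H M := by
  choose J hJ hJ0 using exists_derivative_eq
  let S : ℕ → List A → ℂ[X] := fun k => Nat.rec emptyWord
    (fun _ M w => if w = [] then 1 else J (gapConv (fun u => C (H u)) M w)) k
  have hS0 : ∀ k, S k [] = 1 := by rintro (_ | k) <;> simp [S, emptyWord]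
  have hS : ∀ k w, w ≠ [] → S (k + 1) w = J (gapConv (fun u => C (H u)) (S k) w) := by
    intro k w hw; simp [S, hw]
  have hst : ∀ n, ∀ w : List A, w.length ≤ n → ∀ k, w.length ≤ k → S k w = S w.length w := by
    intro n
    induction n with
    | zero => intro w hw k _; simp at hw; simp [hw, hS0]
    | succ n ih =>
      intro w hw k hk
      by_cases hw0 : w = []
      · simp [hw0, hS0]
      obtain ⟨l, hl⟩ : ∃ l, w.length = l + 1 :=
        Nat.exists_eq_succ_of_ne_zero (by simpa using hw0)
      obtain ⟨k, rfl⟩ : ∃ k', k = k' + 1 := ⟨k - 1, by omega⟩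
      rw [hl, hS _ _ hw0, hS _ _ hw0]
      congr 1
      refine gapConv_congr_of_apply_nil _ (by simp [hH]) fun v hv => ?_
      rw [ih v (by omega) k (by omega), ih v (by omega) l (by omega)]
  refine ⟨fun w => S w.length w, by simp [hS0], ?_, ?_⟩
  · intro w hw
    obtain ⟨l, hl⟩ : ∃ l, w.length = l + 1 :=
      Nat.exists_eq_succ_of_ne_zero (by simpa using hw)
    simp [hl, hS l w hw, hJ0]
  · intro w
    by_cases hw : w = []
    · simp [hw, hS0, gapConv, gapSum, hH]
    obtain ⟨l, hl⟩ : ∃ l, w.length = l + 1 :=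
      Nat.exists_eq_succ_of_ne_zero (by simpa using hw)
    simp only [hl, hS l w hw, hJ]
    exact gapConv_congr_of_apply_nil _ (by simp [hH]) fun v hv => hst _ v le_rfl l (by omega)

theorem IsGeneratedBy.eval_zero_eq {H : List A → ℂ} {M : List A → ℂ[X]} (hM : IsGeneratedBy H M)
    (w : List A) : (M w).eval 0 = emptyWord w := by
  cases w with
  | nil => simp [hM.nil, emptyWord]
  | cons a w => simp [hM.eval_zero, emptyWord]

theorem IsGeneratedBy.coeff_one {H : List A → ℂ} {M : List A → ℂ[X]} (hM : IsGeneratedBy H M)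
    (w : List A) : (M w).coeff 1 = H w := by
  have h1 : (M w).coeff 1 = (derivative (M w)).eval 0 := by
    rw [← coeff_zero_eq_eval_zero, coeff_derivative]; simp
  rw [h1, hM.derivative_eq, ← coe_evalRingHom, map_gapConv]
  simp only [coe_evalRingHom, eval_C, hM.eval_zero_eq]
  exact gapConv_emptyWord H w

theorem IsGeneratedBy.comp_eq {H : List A → ℂ} (hH : H [] = 0) {M : List A → ℂ[X]}
    (hM : IsGeneratedBy H M) (t : ℂ) :
    ∀ (n : ℕ) (w : List A), w.length ≤ n →
      (M w).comp (X + C t) = gapConv M (fun u => C ((M u).eval t)) w := by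
  intro n
  induction n with
  | zero => intro w hw; simp at hw; simp [hw, gapConv, gapSum, hM.nil]
  | succ n ih =>
    intro w hw
    apply eq_of_derivative_eq
    · have h1 := derivative_gapSum (fun u => (M u).eval t) w M (fun u => (M u).eval t)
      rw [gapConv, h1, derivative_comp, hM.derivative_eq, ← coe_compRingHom_apply,
        map_gapConv]
      simp only [derivative_add, derivative_X, derivative_C, add_zero,
        coe_compRingHom_apply, C_comp, one_mul]
      simp only [hM.derivative_eq]
      have := gapConv_assoc (fun u => C (H u)) M (fun u => C ((M u).eval t)) w
      rw [gapConv] at this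
      rw [this]
      exact gapConv_congr_of_apply_nil _ (by simp [hH]) fun v hv => ih v (by omega)
    · rw [← coe_evalRingHom, map_gapConv]
      simp only [coe_evalRingHom, eval_comp, eval_add, eval_X, eval_C, zero_add, hM.eval_zero_eq]
      rw [emptyWord_gapConv]

theorem IsGeneratedBy.eval_add {H : List A → ℂ} (hH : H [] = 0) {M : List A → ℂ[X]}
    (hM : IsGeneratedBy H M) (s t : ℂ) (w : List A) :
    (M w).eval (s + t) = gapConv (fun u => (M u).eval s) (fun u => (M u).eval t) w := by
  have := congrArg (evalRingHom s) (hM.comp_eq hH t _ w le_rfl)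
  rw [map_gapConv] at this
  simpa [coe_evalRingHom, eval_comp] using this

end GapConvolution
section NoncrossingRecursion

open Polynomial

variable {A : Type*} {n : ℕ}

/-- The blocks `σ` form a noncrossing partition of the set `E`. -/
structure IsNCPart (E : Finset (Fin n)) (σ : Finset (Finset (Fin n))) : Prop where
  nonempty : ∀ W ∈ σ, W.Nonempty
  disjoint : ∀ V ∈ σ, ∀ W ∈ σ, ∀ x ∈ V, x ∈ W → V = W
  mem_iff : ∀ x, x ∈ E ↔ ∃ W ∈ σ, x ∈ W
  noncrossing : ∀ a b c d : Fin n, a < b → b < c → c < d →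
    ∀ V ∈ σ, ∀ W ∈ σ, a ∈ V → c ∈ V → b ∈ W → d ∈ W → V = W

/-- No element of `V` lies between two elements of a block of `σ`. -/
def Uncut (V : Finset (Fin n)) (σ : Finset (Finset (Fin n))) : Prop :=
  ∀ v ∈ V, ∀ W ∈ σ, (∀ x ∈ W, x < v) ∨ ∀ x ∈ W, v < x

/-- The subword of `a` supported on `W`. -/
def subword (a : Fin n → A) (W : Finset (Fin n)) : List A := (W.sort (· ≤ ·)).map a

open Classical in
/-- The polynomial weight `X ^ |σ| / t(σ)! * h_σ(a)`. -/
noncomputable def ncWeight (h : List A → ℂ) (a : Fin n → A) (σ : Finset (Finset (Fin n))) :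
    ℂ[X] :=
  ∏ W ∈ σ, C (h (subword a W) * ((σ.filter fun U => NestedIn U W).card : ℂ)⁻¹) * X

open Classical in
/-- The generating polynomial of the noncrossing partitions of `E` not cut by `V`. -/
noncomputable def ncSum (h : List A → ℂ) (a : Fin n → A) (E V : Finset (Fin n)) : ℂ[X] :=
  ∑ σ with IsNCPart E σ ∧ Uncut V σ, ncWeight h a σ

theorem IsNCPart.subset {E : Finset (Fin n)} {σ : Finset (Finset (Fin n))} (hσ : IsNCPart E σ)
    {W : Finset (Fin n)} (hW : W ∈ σ) : W ⊆ E := fun x hx => (hσ.mem_iff x).2 ⟨W, hW, hx⟩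

open Classical in
theorem ncWeight_union (h : List A → ℂ) (a : Fin n → A) {σ τ : Finset (Finset (Fin n))}
    (hστ : Disjoint σ τ)
    (h₁ : ∀ U ∈ σ, ∀ W ∈ τ, ¬ NestedIn U W ∧ ¬ NestedIn W U) :
    ncWeight h a (σ ∪ τ) = ncWeight h a σ * ncWeight h a τ := by
  rw [ncWeight, Finset.prod_union hστ, ncWeight, ncWeight]
  congr 1
  · refine Finset.prod_congr rfl fun W hW => ?_
    rw [Finset.filter_union, Finset.filter_false_of_mem (s := τ) fun U hU => (h₁ W hW U hU).2,
      Finset.union_empty]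
  · refine Finset.prod_congr rfl fun W hW => ?_
    rw [Finset.filter_union, Finset.filter_false_of_mem (s := σ) fun U hU => (h₁ U hU W hW).1,
      Finset.empty_union]

open Classical in
theorem ncSum_insert (h : List A → ℂ) (a : Fin n → A) {E V : Finset (Fin n)} {v : Fin n}
    (hv : v ∉ E) :
    ncSum h a E (insert v V) = ncSum h a (E.filter (· < v)) V * ncSum h a (E.filter (v < ·)) V := by
  rw [ncSum, ncSum, ncSum, Finset.sum_mul_sum, ← Finset.sum_product']
  refine Finset.sum_bij' (fun σ _ => (σ.filter fun W => ∀ x ∈ W, x < v,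
    σ.filter fun W => ∀ x ∈ W, v < x)) (fun p _ => p.1 ∪ p.2) ?_ ?_ ?_ ?_ ?_
  · intro σ hσ
    simp only [Finset.mem_filter, Finset.mem_univ, true_and, Finset.mem_product] at hσ ⊢
    obtain ⟨hσ, hcut⟩ := hσ
    refine ⟨⟨⟨?_, ?_, ?_, ?_⟩, ?_⟩, ⟨⟨?_, ?_, ?_, ?_⟩, ?_⟩⟩
    · exact fun W hW => hσ.nonempty W (Finset.mem_filter.1 hW).1
    · exact fun W hW U hU => hσ.disjoint W (Finset.mem_filter.1 hW).1 U (Finset.mem_filter.1 hU).1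
    · intro x
      simp only [Finset.mem_filter, hσ.mem_iff]
      constructor
      · rintro ⟨⟨W, hW, hx⟩, hxv⟩
        refine ⟨W, ⟨hW, (hcut v (by simp) W hW).resolve_right fun h' => ?_⟩, hx⟩
        exact absurd (h' x hx) hxv.not_gt
      · rintro ⟨W, ⟨hW, h'⟩, hx⟩
        exact ⟨⟨W, hW, hx⟩, h' x hx⟩
    · intro a b c d hab hbc hcd W hW U hU
      exact hσ.noncrossing a b c d hab hbc hcd W (Finset.mem_filter.1 hW).1 U
        (Finset.mem_filter.1 hU).1
    · exact fun u hu W hW => hcut u (by simp [hu]) W (Finset.mem_filter.1 hW).1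
    · exact fun W hW => hσ.nonempty W (Finset.mem_filter.1 hW).1
    · exact fun W hW U hU => hσ.disjoint W (Finset.mem_filter.1 hW).1 U (Finset.mem_filter.1 hU).1
    · intro x
      simp only [Finset.mem_filter, hσ.mem_iff]
      constructor
      · rintro ⟨⟨W, hW, hx⟩, hxv⟩
        refine ⟨W, ⟨hW, (hcut v (by simp) W hW).resolve_left fun h' => ?_⟩, hx⟩
        exact absurd (h' x hx) hxv.not_gt
      · rintro ⟨W, ⟨hW, h'⟩, hx⟩
        exact ⟨⟨W, hW, hx⟩, h' x hx⟩
    · intro a b c d hab hbc hcd W hW U hU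
      exact hσ.noncrossing a b c d hab hbc hcd W (Finset.mem_filter.1 hW).1 U
        (Finset.mem_filter.1 hU).1
    · exact fun u hu W hW => hcut u (by simp [hu]) W (Finset.mem_filter.1 hW).1
  · rintro ⟨σ, τ⟩ hp
    simp only [Finset.mem_filter, Finset.mem_univ, true_and, Finset.mem_product] at hp ⊢
    obtain ⟨⟨hσ, hσV⟩, hτ, hτV⟩ := hp
    have hσv : ∀ W ∈ σ, ∀ x ∈ W, x < v := fun W hW x hx =>
      (Finset.mem_filter.1 (hσ.subset hW hx)).2
    have hτv : ∀ W ∈ τ, ∀ x ∈ W, v < x := fun W hW x hx =>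
      (Finset.mem_filter.1 (hτ.subset hW hx)).2
    refine ⟨⟨?_, ?_, ?_, ?_⟩, ?_⟩
    · intro W hW
      exact (Finset.mem_union.1 hW).elim (hσ.nonempty W) (hτ.nonempty W)
    · intro W hW U hU x hxW hxU
      rcases Finset.mem_union.1 hW with hW | hW <;> rcases Finset.mem_union.1 hU with hU | hU
      · exact hσ.disjoint W hW U hU x hxW hxU
      · exact absurd (hσv W hW x hxW) (hτv U hU x hxU).not_gt
      · exact absurd (hτv W hW x hxW) (hσv U hU x hxU).not_gt
      · exact hτ.disjoint W hW U hU x hxW hxU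
    · intro x
      have h₁ := hσ.mem_iff x
      have h₂ := hτ.mem_iff x
      simp only [Finset.mem_filter] at h₁ h₂
      constructor
      · intro hx
        rcases lt_trichotomy x v with hlt | rfl | hlt
        · obtain ⟨W, hW, hxW⟩ := h₁.1 ⟨hx, hlt⟩
          exact ⟨W, Finset.mem_union_left _ hW, hxW⟩
        · exact absurd hx hv
        · obtain ⟨W, hW, hxW⟩ := h₂.1 ⟨hx, hlt⟩
          exact ⟨W, Finset.mem_union_right _ hW, hxW⟩
      · rintro ⟨W, hW, hxW⟩
        rcases Finset.mem_union.1 hW with hW | hW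
        · exact (h₁.2 ⟨W, hW, hxW⟩).1
        · exact (h₂.2 ⟨W, hW, hxW⟩).1
    · intro a b c d hab hbc hcd W hW U hU haW hcW hbU hdU
      rcases Finset.mem_union.1 hW with hW | hW <;> rcases Finset.mem_union.1 hU with hU | hU
      · exact hσ.noncrossing a b c d hab hbc hcd W hW U hU haW hcW hbU hdU
      · exact absurd ((hσv W hW c hcW).trans (hτv U hU b hbU)) hbc.not_gt
      · exact absurd ((hσv U hU b hbU).trans (hτv W hW a haW)) hab.not_gt
      · exact hτ.noncrossing a b c d hab hbc hcd W hW U hU haW hcW hbU hdU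
    · intro u hu W hW
      rcases Finset.mem_insert.1 hu with rfl | hu <;> rcases Finset.mem_union.1 hW with hW | hW
      · exact Or.inl (hσv W hW)
      · exact Or.inr (hτv W hW)
      · exact hσV u hu W hW
      · exact hτV u hu W hW
  · intro σ hσ
    simp only [Finset.mem_filter, Finset.mem_univ, true_and] at hσ
    ext W
    simp only [Finset.mem_union, Finset.mem_filter]
    constructor
    · rintro (h' | h') <;> exact h'.1
    · intro hW
      exact (hσ.2 v (by simp) W hW).imp (fun h' => ⟨hW, h'⟩) fun h' => ⟨hW, h'⟩
  · rintro ⟨σ, τ⟩ hp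
    simp only [Finset.mem_filter, Finset.mem_univ, true_and, Finset.mem_product] at hp
    obtain ⟨⟨hσ, hσV⟩, hτ, hτV⟩ := hp
    have hσv : ∀ W ∈ σ, ∀ x ∈ W, x < v := fun W hW x hx =>
      (Finset.mem_filter.1 (hσ.subset hW hx)).2
    have hτv : ∀ W ∈ τ, ∀ x ∈ W, v < x := fun W hW x hx =>
      (Finset.mem_filter.1 (hτ.subset hW hx)).2
    refine Prod.ext ?_ ?_
    · ext W
      simp only [Finset.mem_union, Finset.mem_filter]
      refine ⟨?_, fun hW => ⟨Or.inl hW, hσv W hW⟩⟩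
      rintro ⟨hW | hW, h'⟩
      · exact hW
      · obtain ⟨x, hx⟩ := hτ.nonempty W hW
        exact absurd (h' x hx) (hτv W hW x hx).not_gt
    · ext W
      simp only [Finset.mem_union, Finset.mem_filter]
      refine ⟨?_, fun hW => ⟨Or.inr hW, hτv W hW⟩⟩
      rintro ⟨hW | hW, h'⟩
      · obtain ⟨x, hx⟩ := hσ.nonempty W hW
        exact absurd (h' x hx) (hσv W hW x hx).not_gt
      · exact hW
  · intro σ hσ
    simp only [Finset.mem_filter, Finset.mem_univ, true_and] at hσ
    obtain ⟨hσ, hcut⟩ := hσ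
    rw [← ncWeight_union]
    · congr 1
      ext W
      simp only [Finset.mem_union, Finset.mem_filter]
      refine ⟨fun hW => ?_, ?_⟩
      · exact (hcut v (by simp) W hW).imp (fun h' => ⟨hW, h'⟩) fun h' => ⟨hW, h'⟩
      · rintro (h' | h') <;> exact h'.1
    · rw [Finset.disjoint_left]
      intro W h₁ h₂
      obtain ⟨hW, h₁⟩ := Finset.mem_filter.1 h₁
      obtain ⟨x, hx⟩ := hσ.nonempty W hW
      exact absurd (h₁ x hx) ((Finset.mem_filter.1 h₂).2 x hx).not_gt
    · intro U hU W hW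
      obtain ⟨hU, h₁⟩ := Finset.mem_filter.1 hU
      obtain ⟨hW, h₂⟩ := Finset.mem_filter.1 hW
      obtain ⟨x, hx⟩ := hσ.nonempty U hU
      obtain ⟨y, hy⟩ := hσ.nonempty W hW
      refine ⟨fun hn => ?_, fun hn => ?_⟩
      · obtain ⟨z, hz, hzx⟩ := (hn x hx).1
        exact absurd ((h₁ x hx).trans (h₂ z hz)) hzx.not_gt
      · obtain ⟨z, hz, hyz⟩ := (hn y hy).2
        exact absurd ((h₁ z hz).trans (h₂ y hy)) hyz.not_gt

theorem ncSum_congr (h : List A → ℂ) (a : Fin n → A) {E V V' : Finset (Fin n)}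
    (hV : ∀ σ, IsNCPart E σ → (Uncut V σ ↔ Uncut V' σ)) :
    ncSum h a E V = ncSum h a E V' := by
  classical
  rw [ncSum, ncSum]
  congr 1
  ext σ
  simp only [Finset.mem_filter, Finset.mem_univ, true_and]
  exact and_congr_right fun hσ => hV σ hσ

/-- Outermost blocks: each block is nested in exactly one of them. -/
theorem IsNCPart.existsUnique_outer {E : Finset (Fin n)} {σ : Finset (Finset (Fin n))}
    (hσ : IsNCPart E σ) {W : Finset (Fin n)} (hW : W ∈ σ) :
    ∃! V, V ∈ σ ∧ Uncut V (σ.erase V) ∧ NestedIn W V := by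
  classical
  obtain ⟨w, hw⟩ := hσ.nonempty W hW
  obtain ⟨m, hm, hmin⟩ := Finset.exists_min_image
    (E.filter fun x => ∃ U ∈ σ, NestedIn W U ∧ x ∈ U) id
    ⟨w, Finset.mem_filter.2 ⟨hσ.subset hW hw, W, hW, fun y hy => ⟨⟨y, hy, le_rfl⟩, y, hy, le_rfl⟩,
      hw⟩⟩
  obtain ⟨-, V, hV, hWV, hmV⟩ := Finset.mem_filter.1 hm
  have hVcut : Uncut V (σ.erase V) := by
    intro v hv U hU
    obtain ⟨hUV, hU⟩ := Finset.mem_erase.1 hU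
    by_contra hcon
    rw [not_or] at hcon
    obtain ⟨h₁, h₂⟩ := hcon
    push Not at h₁ h₂
    obtain ⟨y, hy, hvy⟩ := h₁
    obtain ⟨x, hx, hxv⟩ := h₂
    have hne : ∀ u ∈ V, ∀ z ∈ U, u ≠ z := by
      rintro u hu z hz rfl
      exact hUV (hσ.disjoint U hU V hV u hz hu)
    have hvy := lt_of_le_of_ne hvy (hne v hv y hy)
    have hxv := lt_of_le_of_ne hxv (hne v hv x hx).symm
    have hxm : x < m := by
      refine lt_of_le_of_ne (not_lt.1 fun hmx => ?_) (hne m hmV x hx).symm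
      exact hUV (hσ.noncrossing m x v y hmx hxv hvy V hV U hU hmV hv hx hy).symm
    have hVy : ∀ b ∈ V, b ≤ y := by
      intro b hb
      by_contra hyb
      exact hUV (hσ.noncrossing x v y b hxv hvy (not_le.1 hyb) U hU V hV hx hy hv hb)
    have hVm : ∀ b ∈ V, m ≤ b := fun b hb =>
      hmin b (Finset.mem_filter.2 ⟨hσ.subset hV hb, V, hV, hWV, hb⟩)
    refine absurd (hmin x (Finset.mem_filter.2 ⟨hσ.subset hU hx, U, hU, ?_, hx⟩)) hxm.not_ge
    intro z hz
    obtain ⟨⟨p, hp, hpz⟩, q, hq, hzq⟩ := hWV z hz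
    exact ⟨⟨x, hx, (hxm.le.trans (hVm p hp)).trans hpz⟩, y, hy, hzq.trans (hVy q hq)⟩
  refine ⟨V, ⟨hV, hVcut, hWV⟩, ?_⟩
  rintro U ⟨hU, hUcut, hWU⟩
  by_contra hUV
  obtain ⟨⟨p, hp, hpw⟩, q, hq, hwq⟩ := hWV w hw
  obtain ⟨⟨r, hr, hrw⟩, s, hs, hws⟩ := hWU w hw
  have hU' : U ∈ σ.erase V := Finset.mem_erase.2 ⟨hUV, hU⟩
  have hV' : V ∈ σ.erase U := Finset.mem_erase.2 ⟨Ne.symm hUV, hV⟩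
  rcases hVcut p hp U hU' with h₁ | h₁
  · exact absurd (h₁ s hs) (hpw.trans hws).not_gt
  · rcases hUcut r hr V hV' with h₂ | h₂
    · exact absurd (h₂ q hq) (hrw.trans hwq).not_gt
    · exact absurd (h₁ r hr) (h₂ p hp).not_gt

open Classical in
theorem IsNCPart.card_eq_sum_outer {E : Finset (Fin n)} {σ : Finset (Finset (Fin n))}
    (hσ : IsNCPart E σ) :
    σ.card = ∑ V ∈ σ with Uncut V (σ.erase V), (σ.filter fun W => NestedIn W V).card := by
  simp only [Finset.card_eq_sum_ones σ, Finset.card_filter]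
  rw [Finset.sum_comm]
  refine Finset.sum_congr rfl fun W hW => ?_
  obtain ⟨V, ⟨hV, hVcut, hWV⟩, huniq⟩ := hσ.existsUnique_outer hW
  rw [Finset.sum_eq_single V, if_pos hWV]
  · intro U hU hUV
    obtain ⟨hU, hUcut⟩ := Finset.mem_filter.1 hU
    exact if_neg fun hWU => hUV (huniq U ⟨hU, hUcut, hWU⟩)
  · exact fun hV' => absurd (Finset.mem_filter.2 ⟨hV, hVcut⟩) hV'

theorem nestedIn_refl (V : Finset (Fin n)) : NestedIn V V :=
  fun w hw => ⟨⟨w, hw, le_rfl⟩, w, hw, le_rfl⟩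

theorem Uncut.not_nestedIn {V : Finset (Fin n)} {σ : Finset (Finset (Fin n))} (h : Uncut V σ)
    (hV : V.Nonempty) {W : Finset (Fin n)} (hW : W ∈ σ) : ¬ NestedIn V W := by
  intro hn
  obtain ⟨v, hv⟩ := hV
  obtain ⟨⟨x, hx, hxv⟩, y, hy, hvy⟩ := hn v hv
  rcases h v hv W hW with h' | h'
  · exact absurd (h' y hy) hvy.not_gt
  · exact absurd (h' x hx) hxv.not_gt

open Classical in
theorem IsNCPart.derivative_ncWeight (h : List A → ℂ) (a : Fin n → A) {E : Finset (Fin n)}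
    {σ : Finset (Finset (Fin n))} (hσ : IsNCPart E σ) :
    derivative (ncWeight h a σ) =
      ∑ V ∈ σ with Uncut V (σ.erase V), C (h (subword a V)) * ncWeight h a (σ.erase V) := by
  have h₁ : ncWeight h a σ = C (∏ W ∈ σ, (h (subword a W) *
      ((σ.filter fun U => NestedIn U W).card : ℂ)⁻¹)) * X ^ σ.card := by
    rw [ncWeight, Finset.prod_mul_distrib, Finset.prod_const, map_prod]
  rw [h₁, derivative_C_mul, derivative_X_pow]
  have h₂ : (σ.card : ℂ) =
      ∑ V ∈ σ with Uncut V (σ.erase V), ((σ.filter fun W => NestedIn W V).card : ℂ) := by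
    exact_mod_cast hσ.card_eq_sum_outer
  rw [h₂, map_sum, Finset.sum_mul, Finset.mul_sum]
  refine Finset.sum_congr rfl fun V hV => ?_
  obtain ⟨hV, hVcut⟩ := Finset.mem_filter.1 hV
  have h₃ : ncWeight h a (σ.erase V) = C (∏ W ∈ σ.erase V, (h (subword a W) *
      ((σ.filter fun U => NestedIn U W).card : ℂ)⁻¹)) * X ^ (σ.card - 1) := by
    rw [ncWeight, Finset.prod_mul_distrib, Finset.prod_const, map_prod,
      Finset.card_erase_of_mem hV]
    congr 1
    refine Finset.prod_congr rfl fun W hW => ?_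
    rw [Finset.filter_erase, Finset.erase_eq_of_notMem]
    exact fun hn => hVcut.not_nestedIn (hσ.nonempty V hV) hW (Finset.mem_filter.1 hn).2
  have h₄ : ((σ.filter fun W => NestedIn W V).card : ℂ) ≠ 0 := by
    have h₅ : V ∈ σ.filter fun W => NestedIn W V := Finset.mem_filter.2 ⟨hV, nestedIn_refl V⟩
    exact_mod_cast (Finset.card_pos.2 ⟨V, h₅⟩).ne'
  rw [h₃, ← Finset.mul_prod_erase σ _ hV, ← mul_assoc, ← mul_assoc, ← C_mul, ← C_mul]
  congr 2
  field_simp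

open Classical in
theorem derivative_ncSum (h : List A → ℂ) (a : Fin n → A) (E : Finset (Fin n)) :
    derivative (ncSum h a E ∅) =
      ∑ V ∈ E.powerset with V.Nonempty, C (h (subword a V)) * ncSum h a (E \ V) V := by
  simp only [ncSum, Finset.mul_sum]
  rw [derivative_sum, Finset.sum_congr rfl (g := fun σ => ∑ V ∈ σ with Uncut V (σ.erase V),
    C (h (subword a V)) * ncWeight h a (σ.erase V))
    fun σ hσ => (Finset.mem_filter.1 hσ).2.1.derivative_ncWeight h a]
  rw [Finset.sum_sigma', Finset.sum_sigma']
  refine Finset.sum_bij' (fun p _ => ⟨p.2, p.1.erase p.2⟩) (fun p _ => ⟨insert p.1 p.2, p.1⟩)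
    ?_ ?_ ?_ ?_ ?_
  · rintro ⟨σ, V⟩ hp
    simp only [Finset.mem_sigma, Finset.mem_filter, Finset.mem_univ, true_and,
      Finset.mem_powerset] at hp ⊢
    obtain ⟨⟨hσ, -⟩, hV, hVcut⟩ := hp
    refine ⟨⟨hσ.subset hV, hσ.nonempty V hV⟩, ⟨?_, ?_, ?_, ?_⟩, hVcut⟩
    · exact fun W hW => hσ.nonempty W (Finset.mem_of_mem_erase hW)
    · exact fun W hW U hU =>
        hσ.disjoint W (Finset.mem_of_mem_erase hW) U (Finset.mem_of_mem_erase hU)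
    · intro x
      simp only [Finset.mem_sdiff, hσ.mem_iff, Finset.mem_erase]
      constructor
      · rintro ⟨⟨W, hW, hx⟩, hxV⟩
        exact ⟨W, ⟨fun hWV => hxV (hWV ▸ hx), hW⟩, hx⟩
      · rintro ⟨W, ⟨hWV, hW⟩, hx⟩
        exact ⟨⟨W, hW, hx⟩, fun hxV => hWV (hσ.disjoint W hW V hV x hx hxV)⟩
    · intro a b c d hab hbc hcd W hW U hU
      exact hσ.noncrossing a b c d hab hbc hcd W (Finset.mem_of_mem_erase hW) U
        (Finset.mem_of_mem_erase hU)
  · rintro ⟨V, τ⟩ hp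
    simp only [Finset.mem_sigma, Finset.mem_filter, Finset.mem_univ, true_and,
      Finset.mem_powerset] at hp ⊢
    obtain ⟨⟨hVE, hVne⟩, hτ, hcut⟩ := hp
    have hdis : ∀ W ∈ τ, ∀ x ∈ W, x ∉ V := fun W hW x hx =>
      (Finset.mem_sdiff.1 (hτ.subset hW hx)).2
    have hVτ : V ∉ τ := fun hV => by
      obtain ⟨x, hx⟩ := hVne
      exact hdis V hV x hx hx
    refine ⟨⟨⟨?_, ?_, ?_, ?_⟩, ?_⟩, Finset.mem_insert_self _ _, ?_⟩
    · intro W hW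
      rcases Finset.mem_insert.1 hW with rfl | hW
      exacts [hVne, hτ.nonempty W hW]
    · intro W hW U hU x hxW hxU
      rcases Finset.mem_insert.1 hW with rfl | hWτ <;> rcases Finset.mem_insert.1 hU with rfl | hUτ
      · rfl
      · exact absurd hxW (hdis U hUτ x hxU)
      · exact absurd hxU (hdis W hWτ x hxW)
      · exact hτ.disjoint W hWτ U hUτ x hxW hxU
    · intro x
      have := hτ.mem_iff x
      rw [Finset.mem_sdiff] at this
      constructor
      · intro hx
        by_cases hxV : x ∈ V
        · exact ⟨V, Finset.mem_insert_self _ _, hxV⟩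
        · obtain ⟨W, hW, hxW⟩ := this.1 ⟨hx, hxV⟩
          exact ⟨W, Finset.mem_insert_of_mem hW, hxW⟩
      · rintro ⟨W, hW, hxW⟩
        rcases Finset.mem_insert.1 hW with rfl | hW
        exacts [hVE hxW, (this.2 ⟨W, hW, hxW⟩).1]
    · intro p q r s hpq hqr hrs W hW U hU hpW hrW hqU hsU
      rcases Finset.mem_insert.1 hW with rfl | hWτ <;> rcases Finset.mem_insert.1 hU with rfl | hUτ
      · rfl
      · rcases hcut r hrW U hUτ with h' | h'
        · exact absurd (h' s hsU) hrs.not_gt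
        · exact absurd (h' q hqU) hqr.not_gt
      · rcases hcut q hqU W hWτ with h' | h'
        · exact absurd (h' r hrW) hqr.not_gt
        · exact absurd (h' p hpW) hpq.not_gt
      · exact hτ.noncrossing p q r s hpq hqr hrs W hWτ U hUτ hpW hrW hqU hsU
    · exact fun v hv => absurd hv (Finset.notMem_empty v)
    · rwa [Finset.erase_insert hVτ]
  · rintro ⟨σ, V⟩ hp
    simp only [Finset.mem_sigma, Finset.mem_filter] at hp
    simp [Finset.insert_erase hp.2.1]
  · rintro ⟨V, τ⟩ hp
    simp only [Finset.mem_sigma, Finset.mem_filter, Finset.mem_univ, true_and] at hp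
    have hVτ : V ∉ τ := fun hV => by
      obtain ⟨x, hx⟩ := hp.1.2
      exact (Finset.mem_sdiff.1 (hp.2.1.subset hV hx)).2 hx
    simp [Finset.erase_insert hVτ]
  · rintro ⟨σ, V⟩ hp
    rfl

theorem subword_empty (a : Fin n → A) : subword a ∅ = [] := by simp [subword]

theorem length_subword (a : Fin n → A) (E : Finset (Fin n)) : (subword a E).length = E.card := by
  simp [subword]

theorem subword_insert_min (a : Fin n → A) {e : Fin n} {E : Finset (Fin n)}
    (h : ∀ x ∈ E, e < x) : subword a (insert e E) = a e :: subword a E := by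
  rw [subword, Finset.sort_insert _ (fun x hx => (h x hx).le) fun he => (h e he).false]
  rfl

theorem subword_union (a : Fin n → A) {D E : Finset (Fin n)} (h : ∀ x ∈ D, ∀ y ∈ E, x < y) :
    subword a (D ∪ E) = subword a D ++ subword a E := by
  induction D using Finset.induction_on_min with
  | empty => simp [subword_empty]
  | insert d D hd ih =>
    rw [Finset.insert_union, subword_insert_min a hd, subword_insert_min, ih, List.cons_append]
    · exact fun x hx => h x (Finset.mem_insert_of_mem hx)
    · intro x hx
      exact (Finset.mem_union.1 hx).elim (hd x) (h d (Finset.mem_insert_self _ _) x)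

/-- Subsets of `E` with their gaps, the pending initial gap being `D`. -/
theorem sum_powerset_ncSum (h : List A → ℂ) (a : Fin n → A) (M : List A → ℂ[X])
    (E : Finset (Fin n)) :
    ∀ (D : Finset (Fin n)) (F : List A → ℂ[X]), (∀ x ∈ D, ∀ y ∈ E, x < y) →
      (∀ L ⊆ D ∪ E, ncSum h a L ∅ = M (subword a L)) →
      ∑ V ∈ E.powerset, F (subword a V) * ncSum h a (D ∪ E \ V) V =
        gapSum M F (fun u => M (subword a D ++ u)) (subword a E) := by
  induction E using Finset.induction_on_min with
  | empty =>
    intro D F _ hM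
    simp [subword_empty, gapSum, hM D]
  | insert e E he ih =>
    intro D F hD hM
    have heE : e ∉ E := fun h' => (he e h').false
    have hDe : ∀ x ∈ D, x < e := fun x hx => hD x hx e (Finset.mem_insert_self _ _)
    have heD : e ∉ D := fun h' => (hDe e h').false
    rw [Finset.sum_powerset_insert heE, subword_insert_min a he, gapSum]
    have hMe : ncSum h a D ∅ = M (subword a D) := hM D Finset.subset_union_left
    congr 1
    · have hu : ∀ u, subword a D ++ a e :: u = subword a (D ∪ {e}) ++ u := by
        intro u
        rw [subword_union a (by simpa using hDe), subword]
        simp [subword]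
      simp only [hu]
      rw [← ih (D ∪ {e}) F]
      · refine Finset.sum_congr rfl fun V hV => ?_
        have : e ∉ V := fun h' => heE (Finset.mem_powerset.1 hV h')
        rw [Finset.insert_sdiff_of_notMem _ this, Finset.union_assoc, Finset.insert_eq]
      · intro x hx y hy
        rcases Finset.mem_union.1 hx with hx | hx
        · exact hD x hx y (Finset.mem_insert_of_mem hy)
        · rw [Finset.mem_singleton.1 hx]
          exact he y hy
      · intro L hL
        exact hM L (by rwa [Finset.union_assoc, ← Finset.insert_eq] at hL)
    · have := ih ∅ (fun u => F (a e :: u)) (by simp) fun L hL =>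
        hM L (hL.trans (by
          rw [Finset.empty_union]
          exact (Finset.subset_insert _ _).trans Finset.subset_union_right))
      simp only [subword_empty, List.nil_append, List.append_nil] at this ⊢
      rw [← this, Finset.mul_sum]
      refine Finset.sum_congr rfl fun V hV => ?_
      have hVE := Finset.mem_powerset.1 hV
      rw [subword_insert_min a fun x hx => he x (hVE hx), ncSum_insert]
      · have h₁ : (D ∪ insert e E \ insert e V).filter (· < e) = D := by
          ext x
          simp only [Finset.mem_filter, Finset.mem_union, Finset.mem_sdiff, Finset.mem_insert]
          have := hDe x
          have := he x
          grind
        have h₂ : (D ∪ insert e E \ insert e V).filter (e < ·) = ∅ ∪ E \ V := by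
          ext x
          simp only [Finset.mem_filter, Finset.mem_union, Finset.mem_sdiff, Finset.mem_insert,
            Finset.notMem_empty, false_or]
          have := hDe x
          have := he x
          grind
        rw [h₁, h₂, ncSum_congr h a (V := V) (V' := ∅) (E := D), hMe]
        · ring
        · intro σ hσ
          refine ⟨fun _ v hv => absurd hv (Finset.notMem_empty v), fun _ v hv W hW => Or.inl ?_⟩
          exact fun x hx => hD x (hσ.subset hW hx) v (Finset.mem_insert_of_mem (hVE hv))
      · simp [heD]

open Classical in
theorem ncSum_eq_of_isGeneratedBy {H : List A → ℂ} (hH : H [] = 0) {M : List A → ℂ[X]}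
    (hM : IsGeneratedBy H M) {h : List A → ℂ} (hh : ∀ u, u ≠ [] → h u = H u) (a : Fin n → A)
    (E : Finset (Fin n)) : ncSum h a E ∅ = M (subword a E) := by
  induction E using Finset.strongInduction with
  | H E ih =>
    have hNC : ∀ σ, IsNCPart (∅ : Finset (Fin n)) σ → σ = ∅ := by
      intro σ hσ
      refine Finset.eq_empty_of_forall_notMem fun W hW => ?_
      obtain ⟨x, hx⟩ := hσ.nonempty W hW
      exact Finset.notMem_empty x (hσ.subset hW hx)
    rcases E.eq_empty_or_nonempty with rfl | hE
    · rw [subword_empty, hM.nil, ncSum, Finset.sum_eq_single ∅]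
      · simp [ncWeight]
      · intro σ hσ hne
        exact absurd (hNC σ (Finset.mem_filter.1 hσ).2.1) hne
      · intro hcon
        refine absurd (Finset.mem_filter.2 ⟨Finset.mem_univ _, ⟨?_, ?_, ?_, ?_⟩, ?_⟩) hcon <;>
          simp [Uncut]
    · apply eq_of_derivative_eq
      · rw [derivative_ncSum, hM.derivative_eq]
        have key := sum_powerset_ncSum h a
          (Function.update M (subword a E) (ncSum h a E ∅)) E ∅ (fun u => C (H u)) (by simp) ?_
        · simp only [Finset.empty_union, subword_empty, List.nil_append] at key
          rw [gapConv_congr_of_apply_nil (G' := Function.update M (subword a E) (ncSum h a E ∅))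
            _ (by simp [hH])]
          · rw [gapConv]
            refine Eq.trans ?_ key
            rw [Finset.sum_filter]
            refine Finset.sum_congr rfl fun V _ => ?_
            split_ifs with hV
            · rw [hh]
              rw [← List.length_pos_iff_ne_nil, length_subword]
              exact hV.card_pos
            · rw [Finset.not_nonempty_iff_eq_empty.1 hV, subword_empty, hH]
              simp
          · intro v hv
            rw [Function.update_of_ne]
            rintro rfl
            exact hv.false
        · intro L hL
          rw [Finset.empty_union] at hL
          rcases hL.eq_or_ssubset with rfl | hL
          · simp
          · rw [Function.update_of_ne, ih L hL]
            intro heq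
            have := congrArg List.length heq
            rw [length_subword, length_subword] at this
            exact (Finset.card_lt_card hL).ne this
      · rw [hM.eval_zero, ncSum, eval_finsetSum]
        · refine Finset.sum_eq_zero fun σ hσ => ?_
          obtain ⟨hσ, -⟩ := (Finset.mem_filter.1 hσ).2
          obtain ⟨x, hx⟩ := hE
          obtain ⟨W, hW, -⟩ := (hσ.mem_iff x).1 hx
          rw [ncWeight, eval_prod]
          exact Finset.prod_eq_zero hW (by simp)
        · rw [← List.length_pos_iff_ne_nil, length_subword]
          exact hE.card_pos

theorem subword_univ (a : Fin n → A) : subword a Finset.univ = List.ofFn a := by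
  rw [subword, Fin.sort_univ, List.ofFn_eq_map]

open Classical in
theorem finsum_noncrossing_eq_eval_ncSum (h : List A → ℂ) (a : Fin n → A) :
    ∑ᶠ π ∈ {π : NPart n | IsNoncrossing π}, (forestFactorial π : ℂ)⁻¹ * blockApply h a π =
      (ncSum h a Finset.univ ∅).eval 1 := by
  rw [finsum_mem_eq_finite_toFinset_sum _ (Set.toFinite _), ncSum, eval_finsetSum]
  refine Finset.sum_bij (fun π _ => π.parts) ?_ ?_ ?_ ?_
  · intro π hπ
    have hπ : IsNoncrossing π := by simpa using hπ
    refine Finset.mem_filter.2 ⟨Finset.mem_univ _, ⟨?_, ?_, ?_, hπ⟩, ?_⟩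
    · exact fun W hW => π.nonempty_of_mem_parts hW
    · exact fun V hV W hW x hxV hxW => π.eq_of_mem_parts hV hW hxV hxW
    · exact fun x => ⟨fun hx => π.exists_mem hx, fun _ => Finset.mem_univ x⟩
    · exact fun v hv => absurd hv (Finset.notMem_empty v)
  · intro π _ π' _ heq
    exact Finpartition.ext heq
  · intro σ hσ
    obtain ⟨hσ, -⟩ := (Finset.mem_filter.1 hσ).2
    refine ⟨⟨σ, ?_, ?_, ?_⟩, ?_, rfl⟩
    · rw [Finset.supIndep_iff_pairwiseDisjoint]
      intro V hV W hW hVW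
      exact Finset.disjoint_left.2 fun x hx hx' => hVW (hσ.disjoint V hV W hW x hx hx')
    · ext x
      simpa [Finset.mem_sup] using (hσ.mem_iff x)
    · intro hbot
      exact Finset.not_nonempty_empty (hσ.nonempty _ hbot)
    · simpa [IsNoncrossing] using hσ.noncrossing
  · intro π _
    rw [ncWeight, eval_prod, forestFactorial, blockApply, Nat.cast_prod, ← Finset.prod_inv_distrib,
      ← Finset.prod_mul_distrib]
    exact Finset.prod_congr rfl fun V _ => by simp [subword, mul_comm]

theorem IsGeneratedBy.eval_one_eq [Ring A] {φ : A → ℂ} (hφ : φ 1 = 1) {h : List A → ℂ}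
    (hmc : MonotoneMC φ h) {H : List A → ℂ} (hH : H [] = 0) {M : List A → ℂ[X]}
    (hM : IsGeneratedBy H M) (hh : ∀ u, u ≠ [] → h u = H u) (w : List A) :
    (M w).eval 1 = φ w.prod := by
  rcases eq_or_ne w [] with rfl | hw
  · simp [hM.nil, hφ]
  · have := hmc w.length (List.length_pos_iff_ne_nil.2 hw) w.get
    rw [finsum_noncrossing_eq_eval_ncSum, ncSum_eq_of_isGeneratedBy hH hM hh, subword_univ] at this
    simpa using this.symm

end NoncrossingRecursion
section StrictMaps

open Polynomial

/-- The number of maps `I → Fin N` that are strictly increasing along `r`. -/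
noncomputable def strictCount {I : Type*} (r : I → I → Prop) (N : ℕ) : ℕ :=
  Nat.card {f : I → Fin N // ∀ v w, r v w → f v < f w}

/-- The number of surjections `I → Fin k` that are strictly increasing along `r`. -/
noncomputable def strictSurjCount {I : Type*} (r : I → I → Prop) (k : ℕ) : ℕ :=
  Nat.card {f : I → Fin k // Function.Surjective f ∧ ∀ v w, r v w → f v < f w}

theorem strictCount_congr {I J : Type*} {r : I → I → Prop} {s : J → J → Prop} (e : I ≃ J)
    (h : ∀ v w, r v w ↔ s (e v) (e w)) (N : ℕ) : strictCount r N = strictCount s N := by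
  refine Nat.card_congr (Equiv.subtypeEquiv (Equiv.arrowCongr e (Equiv.refl _)) fun f => ?_)
  simp only [Equiv.arrowCongr_apply, Equiv.coe_refl, Function.comp_apply, id]
  refine ⟨fun hf v w hvw => hf _ _ ?_, fun hf v w hvw => ?_⟩
  · rw [h]; simpa using hvw
  · simpa using hf (e v) (e w) ((h v w).1 hvw)

theorem strictCount_of_isEmpty {I : Type*} [IsEmpty I] (r : I → I → Prop) (N : ℕ) :
    strictCount r N = 1 := by
  rw [strictCount, Nat.card_eq_one_iff_unique]
  exact ⟨⟨fun f g => Subtype.ext (Subsingleton.elim _ _)⟩,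
    ⟨⟨fun i => isEmptyElim i, fun i => isEmptyElim i⟩⟩⟩

theorem strictCount_zero {I : Type*} [Nonempty I] (r : I → I → Prop) : strictCount r 0 = 0 := by
  have : IsEmpty {f : I → Fin 0 // ∀ v w, r v w → f v < f w} :=
    ⟨fun f => (f.1 (Classical.arbitrary I)).elim0⟩
  exact Nat.card_of_isEmpty

theorem strictCount_sum {I J : Type*} (r : I ⊕ J → I ⊕ J → Prop)
    (h₁ : ∀ x y, ¬ r (.inl x) (.inr y)) (h₂ : ∀ x y, ¬ r (.inr x) (.inl y)) (N : ℕ) :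
    strictCount r N = strictCount (fun x y => r (.inl x) (.inl y)) N *
      strictCount (fun x y => r (.inr x) (.inr y)) N := by
  rw [strictCount, strictCount, strictCount, ← Nat.card_prod]
  refine Nat.card_congr ⟨fun f => (⟨fun x => f.1 (.inl x), fun v w hvw => f.2 _ _ hvw⟩,
    ⟨fun x => f.1 (.inr x), fun v w hvw => f.2 _ _ hvw⟩),
    fun p => ⟨Sum.elim p.1.1 p.2.1, ?_⟩, ?_, ?_⟩
  · rintro (v | v) (w | w) hvw
    · exact p.1.2 v w hvw
    · exact absurd hvw (h₁ v w)
    · exact absurd hvw (h₂ v w)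
    · exact p.2.2 v w hvw
  · rintro ⟨f, hf⟩
    refine Subtype.ext (funext ?_)
    rintro (v | v) <;> rfl
  · rintro ⟨f, g⟩
    rfl

theorem strictCount_option_succ {J : Type*} [Finite J] (r : Option J → Option J → Prop)
    (h₁ : ∀ x, r none (some x)) (h₂ : ∀ x, ¬ r x none) (N : ℕ) :
    strictCount r (N + 1) = strictCount r N + strictCount (fun x y => r (some x) (some y)) N := by
  rw [strictCount, strictCount, strictCount, ← Nat.card_sum]
  symm
  refine Nat.card_congr (Equiv.ofBijective (Sum.elim
    (fun f => ⟨fun x => (f.1 x).succ, fun v w hvw => Fin.succ_lt_succ_iff.2 (f.2 v w hvw)⟩)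
    fun g => ⟨fun x => x.elim 0 fun y => (g.1 y).succ, ?_⟩) ⟨?_, ?_⟩)
  · rintro (_ | v) (_ | w) hvw
    · exact absurd hvw (h₂ _)
    · exact Fin.succ_pos _
    · exact absurd hvw (h₂ _)
    · exact Fin.succ_lt_succ_iff.2 (g.2 v w hvw)
  · rintro (f | f) (g | g) hfg <;> have hfg := congrArg Subtype.val hfg <;>
      simp only [Sum.elim_inl, Sum.elim_inr] at hfg
    · exact congrArg _ (Subtype.ext (funext fun x => Fin.succ_injective _ (congrFun hfg x)))
    · exact absurd (congrFun hfg none) (Fin.succ_ne_zero _)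
    · exact absurd (congrFun hfg none).symm (Fin.succ_ne_zero _)
    · exact congrArg _ (Subtype.ext (funext fun x => Fin.succ_injective _
        (congrFun hfg (some x))))
  · rintro ⟨f, hf⟩
    have hsome : ∀ x, f (some x) ≠ 0 := fun x => (Fin.zero_le _).trans_lt (hf _ _ (h₁ x)) |>.ne'
    by_cases h0 : f none = 0
    · refine ⟨.inr ⟨fun x => (f (some x)).pred (hsome x), fun v w hvw => ?_⟩,
        Subtype.ext (funext ?_)⟩
      · simpa using hf _ _ hvw
      · rintro (_ | x) <;> simp [h0]
    · have hne : ∀ x, f x ≠ 0 := by rintro (_ | x); exacts [h0, hsome x]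
      refine ⟨.inl ⟨fun x => (f x).pred (hne x), fun v w hvw => ?_⟩, Subtype.ext (funext ?_)⟩
      · simpa using hf _ _ hvw
      · intro x; simp

theorem strictSurjCount_eq_zero {I : Type*} [Finite I] (r : I → I → Prop) {k : ℕ}
    (hk : Nat.card I < k) : strictSurjCount r k = 0 := by
  have : IsEmpty {f : I → Fin k // Function.Surjective f ∧ ∀ v w, r v w → f v < f w} := by
    refine ⟨fun f => ?_⟩
    have := Nat.card_le_card_of_surjective f.1 f.2.1
    rw [Nat.card_fin] at this
    omega
  exact Nat.card_of_isEmpty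

theorem strictCount_eq_sum_choose {I : Type*} [Finite I] (r : I → I → Prop) (N : ℕ) :
    strictCount r N =
      ∑ k ∈ Finset.range (Nat.card I + 1), N.choose k * strictSurjCount r k := by
  classical
  cases nonempty_fintype I
  have h₁ : strictCount r N = ∑ s : Finset (Fin N), strictSurjCount r s.card := by
    simp only [strictCount, strictSurjCount]
    rw [← Nat.card_sigma]
    symm
    refine Nat.card_congr (Equiv.ofBijective (fun p => ⟨fun x => p.1.orderEmbOfFin rfl (p.2.1 x),
      fun v w hvw => (OrderEmbedding.lt_iff_lt _).2 (p.2.2.2 v w hvw)⟩) ⟨?_, ?_⟩)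
    · rintro ⟨s, f, hf, hf'⟩ ⟨t, g, hg, hg'⟩ hfg
      have hfg := congrArg Subtype.val hfg
      simp only at hfg
      have him : ∀ (u : Finset (Fin N)) (q : I → Fin u.card), Function.Surjective q →
          Set.range (fun x => u.orderEmbOfFin rfl (q x)) = u := by
        intro u q hq
        rw [← Finset.range_orderEmbOfFin u rfl]
        exact hq.range_comp _
      have hst : s = t := by
        rw [← Finset.coe_inj, ← him s f hf, ← him t g hg, hfg]
      subst hst
      congr 2
      funext x
      exact (s.orderEmbOfFin rfl).injective (congrFun hfg x)
    · rintro ⟨f, hf⟩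
      refine ⟨⟨Finset.univ.image f, fun x => ((Finset.univ.image f).orderIsoOfFin rfl).symm
        ⟨f x, Finset.mem_image_of_mem f (Finset.mem_univ x)⟩, ?_, ?_⟩, ?_⟩
      · intro y
        obtain ⟨x, -, hx⟩ := Finset.mem_image.1 ((Finset.univ.image f).orderIsoOfFin rfl y).2
        refine ⟨x, ?_⟩
        rw [OrderIso.symm_apply_eq]
        exact Subtype.ext hx
      · intro v w hvw
        rw [OrderIso.lt_iff_lt]
        exact hf v w hvw
      · refine Subtype.ext (funext fun x => ?_)
        simp [← Finset.coe_orderIsoOfFin_apply]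
  have h₂ := Finset.sum_powerset_apply_card (fun k => strictSurjCount r k)
    (x := (Finset.univ : Finset (Fin N)))
  rw [Finset.powerset_univ, Finset.card_fin] at h₂
  rw [h₁, h₂]
  simp only [smul_eq_mul]
  rw [Finset.sum_subset (Finset.range_subset_range.2 (le_max_left (N + 1) (Nat.card I + 1))),
    Finset.sum_subset (Finset.range_subset_range.2 (le_max_right (N + 1) (Nat.card I + 1)))]
  · intro k _ hk
    rw [strictSurjCount_eq_zero r (by simpa using hk), mul_zero]
  · intro k _ hk
    rw [Nat.choose_eq_zero_of_lt (by simpa using hk), zero_mul]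

/-- The polynomial `X (X - 1) ⋯ (X - k + 1) / k!`. -/
noncomputable def binomPoly (k : ℕ) : ℂ[X] := C ((k.factorial : ℂ)⁻¹) * descPochhammer ℂ k

theorem eval_natCast_binomPoly (k N : ℕ) : (binomPoly k).eval (N : ℂ) = N.choose k := by
  rw [binomPoly, eval_mul, eval_C, descPochhammer_eval_eq_descFactorial,
    Nat.descFactorial_eq_factorial_mul_choose, Nat.cast_mul, inv_mul_cancel_left₀]
  exact_mod_cast k.factorial_ne_zero

theorem coeff_one_binomPoly_succ (k : ℕ) :
    (binomPoly (k + 1)).coeff 1 = (-1) ^ k / ((k : ℂ) + 1) := by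
  have h : (descPochhammer ℂ k).eval (-1) = (-1) ^ k * k.factorial := by
    induction k with
    | zero => simp
    | succ k ih =>
      rw [descPochhammer_succ_eval, ih, Nat.factorial_succ]
      push_cast
      ring
  rw [binomPoly, coeff_C_mul, descPochhammer_succ_left, coeff_X_mul, coeff_zero_eq_eval_zero,
    eval_comp]
  simp only [eval_sub, eval_X, eval_one, zero_sub, h]
  have h₁ : (k.factorial : ℂ) ≠ 0 := by exact_mod_cast k.factorial_ne_zero
  have h₂ : (k : ℂ) + 1 ≠ 0 := by exact_mod_cast k.succ_ne_zero
  rw [Nat.factorial_succ]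
  push_cast
  field_simp

theorem coeff_one_binomPoly_zero : (binomPoly 0).coeff 1 = 0 := by
  simp [binomPoly, coeff_one]

end StrictMaps
section Paths

namespace PTree

/-- Shift a path into the forest `cs` to a path into the forest `c :: cs`. -/
def bump : List ℕ → List ℕ
  | [] => []
  | i :: p => (i + 1) :: p

theorem bump_injective : Function.Injective bump := by
  rintro (_ | ⟨i, p⟩) (_ | ⟨j, q⟩) h <;> simp_all [bump]

theorem bump_eq_nil {q : List ℕ} : bump q = [] ↔ q = [] := by
  cases q <;> simp [bump]

theorem bump_ne_zero_cons {p q : List ℕ} : bump q ≠ 0 :: p := by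
  cases q <;> simp [bump]

theorem exists_eq_cons_or_bump {q : List ℕ} (hq : q ≠ []) :
    (∃ p, q = 0 :: p) ∨ ∃ p, p ≠ [] ∧ q = bump p := by
  rcases q with _ | ⟨_ | i, p⟩
  · exact absurd rfl hq
  · exact Or.inl ⟨p, rfl⟩
  · exact Or.inr ⟨i :: p, by simp, rfl⟩

/-- Nonempty paths go to the first tree or to the other trees of a forest. -/
noncomputable def pathSplit (R : List ℕ → Prop) :
    {p // R (0 :: p)} ⊕ {q // q ≠ [] ∧ R (bump q)} ≃ {q // q ≠ [] ∧ R q} :=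
  Equiv.ofBijective (Sum.elim (fun p => ⟨0 :: p.1, by simp, p.2⟩)
    fun q => ⟨bump q.1, by simpa [bump_eq_nil] using q.2.1, q.2.2⟩) <| by
    constructor
    · rintro (⟨p, hp⟩ | ⟨p, hp⟩) (⟨q, hq⟩ | ⟨q, hq⟩) h <;> have h := congrArg Subtype.val h <;>
        simp only [Sum.elim_inl, Sum.elim_inr] at h
      · simpa using h
      · exact absurd h.symm bump_ne_zero_cons
      · exact absurd h bump_ne_zero_cons
      · have := bump_injective h
        subst this
        rfl
    · rintro ⟨q, hq, hR⟩
      rcases exists_eq_cons_or_bump hq with ⟨p, rfl⟩ | ⟨p, hp, rfl⟩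
      · exact ⟨.inl ⟨p, hR⟩, rfl⟩
      · exact ⟨.inr ⟨p, hp, hR⟩, rfl⟩

theorem finprod_mem_path_split {M : Type*} [CommMonoid M] (R : List ℕ → Prop)
    (hR : {q | q ≠ [] ∧ R q}.Finite) (g : List ℕ → M) :
    ∏ᶠ q ∈ {q | q ≠ [] ∧ R q}, g q =
      (∏ᶠ p ∈ {p | R (0 :: p)}, g (0 :: p)) *
        ∏ᶠ q ∈ {q | q ≠ [] ∧ R (bump q)}, g (bump q) := by
  have hset : {q | q ≠ [] ∧ R q} =
      (fun p => 0 :: p) '' {p | R (0 :: p)} ∪ bump '' {q | q ≠ [] ∧ R (bump q)} := by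
    ext q
    simp only [Set.mem_union, Set.mem_image, Set.mem_ofPred_eq]
    constructor
    · rintro ⟨hq, hRq⟩
      rcases exists_eq_cons_or_bump hq with ⟨p, rfl⟩ | ⟨p, hp, rfl⟩
      · exact Or.inl ⟨p, hRq, rfl⟩
      · exact Or.inr ⟨p, ⟨hp, hRq⟩, rfl⟩
    · rintro (⟨p, hp, rfl⟩ | ⟨p, ⟨hp, hRp⟩, rfl⟩)
      · exact ⟨by simp, hp⟩
      · exact ⟨by simpa [bump_eq_nil] using hp, hRp⟩
  have hfin := hR
  rw [hset, Set.finite_union] at hfin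
  rw [hset, finprod_mem_union _ hfin.1 hfin.2, finprod_mem_image, finprod_mem_image]
  · exact bump_injective.injOn
  · intro p _ q _ h
    simpa using h
  · rw [Set.disjoint_left]
    rintro _ ⟨p, -, rfl⟩ ⟨q, -, h⟩
    exact bump_ne_zero_cons h

theorem subtreeAt_cons_zero (c : PTree) (cs : List PTree) (p : List ℕ) :
    subtreeAt (0 :: p) (node (c :: cs)) = subtreeAt p c := by
  simp [subtreeAt]

theorem subtreeAt_cons_bump (c : PTree) (cs : List PTree) {q : List ℕ} (hq : q ≠ []) :
    subtreeAt (bump q) (node (c :: cs)) = subtreeAt q (node cs) := by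
  cases q with
  | nil => exact absurd rfl hq
  | cons i p => simp [bump, subtreeAt]

theorem subtreeAt_nil_children {q : List ℕ} (hq : q ≠ []) : subtreeAt q (node []) = none := by
  cases q with
  | nil => exact absurd rfl hq
  | cons i p => simp [subtreeAt]

theorem subtreeAt_nil (t : PTree) : subtreeAt [] t = some t := by
  cases t; rfl

theorem induction_children {P : PTree → Prop} (h : ∀ cs, (∀ c ∈ cs, P c) → P (node cs)) :
    ∀ t, P t
  | node cs => h cs fun c _ => induction_children h c

theorem finite_vertices (t : PTree) : {p | IsVertex t p}.Finite := by
  induction t using induction_children with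
  | h cs ih =>
    have hforest : {q | q ≠ [] ∧ IsVertex (node cs) q}.Finite := by
      induction cs with
      | nil =>
        convert Set.finite_empty (α := List ℕ)
        ext q
        simp only [Set.mem_ofPred_eq, Set.mem_empty_iff_false, iff_false, IsVertex]
        rintro ⟨hq, h⟩
        rw [subtreeAt_nil_children hq] at h
        simp at h
      | cons c cs ihcs =>
        refine Set.Finite.subset (((ih c (by simp)).image (fun p => 0 :: p)).union
          ((ihcs fun c hc => ih c (by simp [hc])).image bump)) ?_
        rintro q ⟨hq, hR⟩
        rcases exists_eq_cons_or_bump hq with ⟨p, rfl⟩ | ⟨p, hp, rfl⟩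
        · exact Or.inl ⟨p, by simpa [IsVertex, subtreeAt_cons_zero] using hR, rfl⟩
        · exact Or.inr ⟨p, ⟨hp, by simpa [IsVertex, subtreeAt_cons_bump c cs hp] using hR⟩, rfl⟩
    refine (hforest.insert []).subset fun q hq => ?_
    by_cases h : q = []
    · exact Or.inl h
    · exact Or.inr ⟨h, hq⟩

theorem IsLeafAt.isVertex {t : PTree} {p : List ℕ} (h : IsLeafAt t p) : IsVertex t p := by
  rw [IsLeafAt] at h; simp [IsVertex, h]

theorem IsInternalAt.isVertex {t : PTree} {p : List ℕ} (h : IsInternalAt t p) : IsVertex t p := by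
  obtain ⟨cs, h, -⟩ := h; simp [IsVertex, h]

theorem finite_isLeafAt (t : PTree) : {p | IsLeafAt t p}.Finite :=
  (finite_vertices t).subset fun _ h => IsLeafAt.isVertex h

theorem finite_isInternalAt (t : PTree) : {p | IsInternalAt t p}.Finite :=
  (finite_vertices t).subset fun _ h => IsInternalAt.isVertex h

theorem isLeafAt_cons_zero (c : PTree) (cs : List PTree) (p : List ℕ) :
    IsLeafAt (node (c :: cs)) (0 :: p) ↔ IsLeafAt c p := by
  rw [IsLeafAt, subtreeAt_cons_zero, IsLeafAt]

theorem isLeafAt_cons_bump (c : PTree) (cs : List PTree) {q : List ℕ} (hq : q ≠ []) :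
    IsLeafAt (node (c :: cs)) (bump q) ↔ IsLeafAt (node cs) q := by
  rw [IsLeafAt, subtreeAt_cons_bump c cs hq, IsLeafAt]

theorem isInternalAt_cons_zero (c : PTree) (cs : List PTree) (p : List ℕ) :
    IsInternalAt (node (c :: cs)) (0 :: p) ↔ IsInternalAt c p := by
  rw [IsInternalAt, subtreeAt_cons_zero, IsInternalAt]

theorem isInternalAt_cons_bump (c : PTree) (cs : List PTree) {q : List ℕ} (hq : q ≠ []) :
    IsInternalAt (node (c :: cs)) (bump q) ↔ IsInternalAt (node cs) q := by
  rw [IsInternalAt, subtreeAt_cons_bump c cs hq, IsInternalAt]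

theorem isInternalAt_nil {cs : List PTree} : IsInternalAt (node cs) [] ↔ cs ≠ [] := by
  simp [IsInternalAt, subtreeAt]

theorem not_isInternalAt_node_nil {q : List ℕ} : ¬ IsInternalAt (node []) q := by
  rintro ⟨cs, h, hcs⟩
  by_cases hq : q = []
  · subst hq
    simp [subtreeAt] at h
    exact hcs h
  · rw [subtreeAt_nil_children hq] at h
    simp at h

theorem natCard_path_split (R : List ℕ → Prop) (hR : {q | q ≠ [] ∧ R q}.Finite) :
    Nat.card {q // q ≠ [] ∧ R q} =
      Nat.card {p // R (0 :: p)} + Nat.card {q // q ≠ [] ∧ R (bump q)} := by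
  have : Finite {q // q ≠ [] ∧ R q} := hR
  have : Finite ({p // R (0 :: p)} ⊕ {q // q ≠ [] ∧ R (bump q)}) :=
    Finite.of_equiv _ (pathSplit R).symm
  have h₁ : Finite {p // R (0 :: p)} := Finite.sum_left {q // q ≠ [] ∧ R (bump q)}
  have h₂ : Finite {q // q ≠ [] ∧ R (bump q)} := Finite.sum_right {p // R (0 :: p)}
  rw [← Nat.card_congr (pathSplit R), Nat.card_sum]

theorem numLeaves_leaf : numLeaves leaf = 1 := by
  rw [numLeaves, Nat.card_eq_one_iff_unique]
  refine ⟨⟨fun p q => Subtype.ext ?_⟩, ⟨⟨[], rfl⟩⟩⟩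
  have h : ∀ p : {p // IsLeafAt leaf p}, p.1 = [] := by
    rintro ⟨p, hp⟩
    by_contra hne
    rw [IsLeafAt, leaf, subtreeAt_nil_children hne] at hp
    simp at hp
  rw [h p, h q]

theorem natCard_forest_leaves (cs : List PTree) :
    Nat.card {q // q ≠ [] ∧ IsLeafAt (node cs) q} = (cs.map numLeaves).sum := by
  induction cs with
  | nil =>
    have : IsEmpty {q // q ≠ [] ∧ IsLeafAt (node []) q} := by
      refine ⟨fun ⟨q, hq, h⟩ => ?_⟩
      rw [IsLeafAt, subtreeAt_nil_children hq] at h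
      simp at h
    simp
  | cons c cs ih =>
    rw [natCard_path_split (IsLeafAt (node (c :: cs)))
      ((finite_isLeafAt _).subset fun q hq => hq.2)]
    simp only [isLeafAt_cons_zero, List.map_cons, List.sum_cons, ← ih]
    congr 1
    exact Nat.card_congr (Equiv.subtypeEquivRight fun q =>
      and_congr_right fun hq => isLeafAt_cons_bump c cs hq)

theorem numLeaves_node {cs : List PTree} (hcs : cs ≠ []) :
    numLeaves (node cs) = (cs.map numLeaves).sum := by
  rw [← natCard_forest_leaves, numLeaves]
  refine Nat.card_congr (Equiv.subtypeEquivRight fun q => ?_)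
  refine ⟨fun h => ⟨?_, h⟩, fun h => h.2⟩
  rintro rfl
  simp only [IsLeafAt, subtreeAt, leaf, Option.some.injEq, node.injEq] at h
  exact hcs h

theorem numLeaves_pos (t : PTree) : 1 ≤ numLeaves t := by
  induction t using induction_children with
  | h cs ih =>
    cases cs with
    | nil => exact numLeaves_leaf.ge
    | cons c cs =>
      rw [numLeaves_node (by simp), List.map_cons, List.sum_cons]
      exact (ih c (by simp)).trans (Nat.le_add_right _ _)

theorem lex_cons_zero (q p : List ℕ) :
    List.Lex (· < ·) (0 :: q) (0 :: p) ↔ List.Lex (· < ·) q p := by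
  simp [List.cons_lex_cons_iff]

theorem lex_bump (q p : List ℕ) :
    List.Lex (· < ·) (bump q) (bump p) ↔ List.Lex (· < ·) q p := by
  cases q <;> cases p <;> simp [bump, List.cons_lex_cons_iff]

theorem bump_prefix_bump {q p : List ℕ} : bump p <+: bump q ↔ p <+: q := by
  cases q <;> cases p <;> simp [bump, List.cons_prefix_cons]

theorem not_lex_bump_zero {p q : List ℕ} (hq : q ≠ []) :
    ¬ List.Lex (· < ·) (bump q) (0 :: p) := by
  cases q <;> simp_all [bump, List.cons_lex_cons_iff]

theorem lex_zero_bump {p q : List ℕ} (hq : q ≠ []) : List.Lex (· < ·) (0 :: p) (bump q) := by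
  cases q <;> simp_all [bump, List.cons_lex_cons_iff]

theorem not_bump_prefix_zero {p q : List ℕ} (hq : q ≠ []) : ¬ bump q <+: 0 :: p := by
  cases q <;> simp_all [bump, List.cons_prefix_cons]

theorem not_zero_prefix_bump {p q : List ℕ} : ¬ 0 :: p <+: bump q := by
  cases q <;> simp_all [bump, List.cons_prefix_cons]

theorem leavesBefore_node {cs : List PTree} (hcs : cs ≠ []) (p : List ℕ) :
    leavesBefore (node cs) p = Nat.card {q : List ℕ // q ≠ [] ∧
      IsLeafAt (node cs) q ∧ List.Lex (· < ·) q p ∧ ¬ p <+: q} := by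
  refine Nat.card_congr (Equiv.subtypeEquivRight fun q => ?_)
  refine ⟨fun h => ⟨?_, h⟩, fun h => h.2⟩
  rintro rfl
  simp only [IsLeafAt, subtreeAt, leaf, Option.some.injEq, node.injEq] at h
  exact hcs h.1

theorem leavesBefore_nil (t : PTree) : leavesBefore t [] = 0 := by
  have : IsEmpty {q : List ℕ // IsLeafAt t q ∧ List.Lex (· < ·) q [] ∧ ¬ [] <+: q} :=
    ⟨fun q => q.2.2.2 List.nil_prefix⟩
  exact Nat.card_of_isEmpty

theorem leavesBefore_cons_zero (c : PTree) (cs : List PTree) (p : List ℕ) :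
    leavesBefore (node (c :: cs)) (0 :: p) = leavesBefore c p := by
  rw [leavesBefore_node (by simp),
    natCard_path_split _ ((finite_isLeafAt _).subset fun q hq => hq.2.1)]
  have : IsEmpty {q : List ℕ // q ≠ [] ∧ IsLeafAt (node (c :: cs)) (bump q) ∧
      List.Lex (· < ·) (bump q) (0 :: p) ∧ ¬ 0 :: p <+: bump q} :=
    ⟨fun q => not_lex_bump_zero q.2.1 q.2.2.2.1⟩
  rw [Nat.card_of_isEmpty (α := {q : List ℕ // q ≠ [] ∧ _}), add_zero, leavesBefore]
  simp only [isLeafAt_cons_zero, lex_cons_zero, List.cons_prefix_cons, true_and]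

theorem leavesBefore_cons_bump (c : PTree) {cs : List PTree} (hcs : cs ≠ []) {p : List ℕ}
    (hp : p ≠ []) :
    leavesBefore (node (c :: cs)) (bump p) = numLeaves c + leavesBefore (node cs) p := by
  rw [leavesBefore_node (by simp),
    natCard_path_split _ ((finite_isLeafAt _).subset fun q hq => hq.2.1)]
  congr 1
  · simp only [isLeafAt_cons_zero, lex_zero_bump hp, not_bump_prefix_zero hp, not_false_eq_true,
      and_true]
    rfl
  · rw [leavesBefore_node hcs]
    refine Nat.card_congr (Equiv.subtypeEquivRight fun q => and_congr_right fun hq => ?_)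
    rw [isLeafAt_cons_bump c _ hq, lex_bump, bump_prefix_bump]

theorem subtree!_cons_zero (c : PTree) (cs : List PTree) (p : List ℕ) :
    subtree! (node (c :: cs)) (0 :: p) = subtree! c p := by
  rw [subtree!, subtreeAt_cons_zero, subtree!]

theorem subtree!_cons_bump (c : PTree) (cs : List PTree) {q : List ℕ} (hq : q ≠ []) :
    subtree! (node (c :: cs)) (bump q) = subtree! (node cs) q := by
  rw [subtree!, subtreeAt_cons_bump c cs hq, subtree!]

theorem subtree!_nil (t : PTree) : subtree! t [] = t := by
  rw [subtree!, subtreeAt_nil]; rfl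

theorem numLeaves_node_cons (c : PTree) {cs : List PTree} (hcs : cs ≠ []) :
    numLeaves (node (c :: cs)) = numLeaves c + numLeaves (node cs) := by
  rw [numLeaves_node (by simp), numLeaves_node hcs, List.map_cons, List.sum_cons]

theorem numLeaves_node_singleton (c : PTree) : numLeaves (node [c]) = numLeaves c := by
  rw [numLeaves_node (by simp)]; simp

theorem not_isVertex_nil_children {q : List ℕ} (hq : q ≠ []) : ¬ IsVertex (node []) q := by
  rw [IsVertex, subtreeAt_nil_children hq]; simp

theorem leavesBefore_add_numLeaves_le (t : PTree) :
    ∀ p, IsVertex t p → leavesBefore t p + numLeaves (subtree! t p) ≤ numLeaves t := by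
  induction t using induction_children with
  | h cs ih =>
    have hforest : ∀ q ≠ [], IsVertex (node cs) q →
        leavesBefore (node cs) q + numLeaves (subtree! (node cs) q) ≤ numLeaves (node cs) := by
      induction cs with
      | nil => exact fun q hq h => absurd h (not_isVertex_nil_children hq)
      | cons c cs ihcs =>
        intro q hq hv
        rcases exists_eq_cons_or_bump hq with ⟨p, rfl⟩ | ⟨p, hp, rfl⟩
        · rw [leavesBefore_cons_zero, subtree!_cons_zero]
          rw [IsVertex, subtreeAt_cons_zero] at hv
          refine (ih c (by simp) p hv).trans ?_
          rw [numLeaves_node (by simp), List.map_cons, List.sum_cons]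
          exact Nat.le_add_right _ _
        · rw [IsVertex, subtreeAt_cons_bump c cs hp] at hv
          have hcs : cs ≠ [] := by
            rintro rfl
            exact not_isVertex_nil_children hp hv
          rw [leavesBefore_cons_bump c hcs hp, subtree!_cons_bump c cs hp,
            numLeaves_node_cons c hcs, add_assoc]
          exact Nat.add_le_add_left (ihcs (fun c hc => ih c (by simp [hc])) p hp hv) _
    intro p hp
    by_cases h : p = []
    · rw [h, leavesBefore_nil, subtree!_nil, zero_add]
    · exact hforest p h hp

theorem sectorIn_nil {t : PTree} {j : ℕ} : SectorIn t [] j ↔ j + 2 ≤ numLeaves t := by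
  simp [SectorIn, leavesBefore_nil, subtree!_nil]

theorem SectorIn.le {t : PTree} {p : List ℕ} {j : ℕ} (h : SectorIn t p j)
    (hp : IsInternalAt t p) : j + 2 ≤ numLeaves t :=
  h.2.trans (leavesBefore_add_numLeaves_le t p hp.isVertex)

theorem sectorIn_cons_zero (c : PTree) (cs : List PTree) (p : List ℕ) (j : ℕ) :
    SectorIn (node (c :: cs)) (0 :: p) j ↔ SectorIn c p j := by
  rw [SectorIn, leavesBefore_cons_zero, subtree!_cons_zero, SectorIn]

theorem sectorIn_cons_bump (c : PTree) {cs : List PTree} (hcs : cs ≠ []) {q : List ℕ}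
    (hq : q ≠ []) (j : ℕ) :
    SectorIn (node (c :: cs)) (bump q) j ↔
      numLeaves c ≤ j ∧ SectorIn (node cs) q (j - numLeaves c) := by
  rw [SectorIn, leavesBefore_cons_bump c hcs hq, subtree!_cons_bump c cs hq, SectorIn]
  omega

theorem ownsSector_cons_zero (c : PTree) (cs : List PTree) (p : List ℕ) (j : ℕ) :
    OwnsSector (node (c :: cs)) (0 :: p) j ↔ OwnsSector c p j := by
  rw [OwnsSector, isInternalAt_cons_zero, sectorIn_cons_zero, OwnsSector]
  refine and_congr_right fun _ => and_congr_right fun _ => ⟨fun h w hw hpw hne => ?_,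
    fun h w hw hpw hne => ?_⟩
  · rw [← sectorIn_cons_zero c cs]
    exact h (0 :: w) (by rwa [isInternalAt_cons_zero])
      (by rwa [List.cons_prefix_cons, and_iff_right rfl]) (by simpa using hne)
  · obtain ⟨s, rfl⟩ := hpw
    rw [List.cons_append] at hw hne ⊢
    rw [isInternalAt_cons_zero] at hw
    rw [sectorIn_cons_zero]
    exact h _ hw (List.prefix_append _ _) (by simpa using hne)

theorem ownsSector_cons_bump (c : PTree) {cs : List PTree} {q : List ℕ}
    (hq : q ≠ []) (j : ℕ) :
    OwnsSector (node (c :: cs)) (bump q) j ↔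
      numLeaves c ≤ j ∧ OwnsSector (node cs) q (j - numLeaves c) := by
  by_cases hcs : cs = []
  · subst hcs
    simp [OwnsSector, isInternalAt_cons_bump c _ hq, not_isInternalAt_node_nil]
  rw [OwnsSector, isInternalAt_cons_bump c cs hq, sectorIn_cons_bump c hcs hq, OwnsSector]
  constructor
  · rintro ⟨h₁, ⟨h₂, h₃⟩, h₄⟩
    refine ⟨h₂, h₁, h₃, fun w hw hqw hne hs => ?_⟩
    have hw' : w ≠ [] := by
      rintro rfl
      exact hne (List.prefix_nil.1 hqw).symm
    exact h₄ (bump w) (by rwa [isInternalAt_cons_bump c cs hw']) (bump_prefix_bump.2 hqw)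
      (bump_injective.ne hne) ((sectorIn_cons_bump c hcs hw' j).2 ⟨h₂, hs⟩)
  · rintro ⟨h₂, h₁, h₃, h₄⟩
    refine ⟨h₁, ⟨h₂, h₃⟩, fun w hw hqw hne hs => ?_⟩
    have hw' : w ≠ [] := by
      rintro rfl
      exact hne (List.prefix_nil.1 hqw).symm
    rcases exists_eq_cons_or_bump hw' with ⟨p, rfl⟩ | ⟨p, hp, rfl⟩
    · exact not_bump_prefix_zero hq hqw
    · rw [isInternalAt_cons_bump c cs hp] at hw
      exact h₄ p hw (bump_prefix_bump.1 hqw) (fun h => hne (congrArg bump h))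
        ((sectorIn_cons_bump c hcs hp j).1 hs).2

theorem ownsSector_nil_iff {cs : List PTree} (hcs : cs ≠ []) (j : ℕ) :
    OwnsSector (node cs) [] j ↔ j + 2 ≤ numLeaves (node cs) ∧
      ∀ w, w ≠ [] → IsInternalAt (node cs) w → ¬ SectorIn (node cs) w j := by
  rw [OwnsSector, isInternalAt_nil, sectorIn_nil]
  exact ⟨fun h => ⟨h.2.1, fun w hw hi => h.2.2 w hi List.nil_prefix hw⟩,
    fun h => ⟨hcs, h.1, fun w hi _ hw => h.2 w hw hi⟩⟩

theorem isInternalAt_nil_of_two_le {t : PTree} (h : 2 ≤ numLeaves t) : IsInternalAt t [] := by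
  obtain ⟨cs⟩ := t
  rw [isInternalAt_nil]
  rintro rfl
  rw [numLeaves_leaf] at h
  omega

theorem not_ownsSector_nil_of_lt (c : PTree) (cs : List PTree) {j : ℕ}
    (hj : j + 2 ≤ numLeaves c) : ¬ OwnsSector (node (c :: cs)) [] j := by
  rw [ownsSector_nil_iff (by simp)]
  rintro ⟨-, h⟩
  refine h [0] (by simp) ?_ ?_
  · rw [isInternalAt_cons_zero]
    exact isInternalAt_nil_of_two_le (by omega)
  · rwa [sectorIn_cons_zero, sectorIn_nil]

theorem not_ownsSector_singleton_nil (c : PTree) (j : ℕ) : ¬ OwnsSector (node [c]) [] j := by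
  intro h
  refine not_ownsSector_nil_of_lt c [] ?_ h
  have := h.2.1
  rwa [sectorIn_nil, numLeaves_node_singleton] at this

theorem ownsSector_nil_middle (c : PTree) {cs : List PTree} (hcs : cs ≠ []) {j : ℕ}
    (hj : j + 1 = numLeaves c) : OwnsSector (node (c :: cs)) [] j := by
  rw [ownsSector_nil_iff (by simp)]
  refine ⟨?_, fun w hw hi hs => ?_⟩
  · have := numLeaves_pos (node cs)
    rw [numLeaves_node_cons c hcs]
    omega
  · rcases exists_eq_cons_or_bump hw with ⟨p, rfl⟩ | ⟨p, hp, rfl⟩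
    · rw [sectorIn_cons_zero] at hs
      rw [isInternalAt_cons_zero] at hi
      have := hs.le hi
      omega
    · rw [sectorIn_cons_bump c hcs hp] at hs
      omega

theorem ownsSector_nil_of_le (c : PTree) {cs : List PTree} (hcs : cs ≠ []) {j : ℕ}
    (hj : numLeaves c ≤ j) :
    OwnsSector (node (c :: cs)) [] j ↔ OwnsSector (node cs) [] (j - numLeaves c) := by
  rw [ownsSector_nil_iff (by simp), ownsSector_nil_iff hcs, numLeaves_node_cons c hcs]
  refine and_congr (by omega) ⟨fun h w hw hi hs => ?_, fun h w hw hi hs => ?_⟩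
  · exact h (bump w) (by rwa [Ne, bump_eq_nil]) (by rwa [isInternalAt_cons_bump c cs hw])
      ((sectorIn_cons_bump c hcs hw j).2 ⟨hj, hs⟩)
  · rcases exists_eq_cons_or_bump hw with ⟨p, rfl⟩ | ⟨p, hp, rfl⟩
    · rw [sectorIn_cons_zero] at hs
      rw [isInternalAt_cons_zero] at hi
      have := hs.le hi
      omega
    · rw [isInternalAt_cons_bump c cs hp] at hi
      exact h p hp hi ((sectorIn_cons_bump c hcs hp j).1 hs).2

theorem OwnsSector.le {t : PTree} {p : List ℕ} {j : ℕ} (h : OwnsSector t p j) :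
    j + 2 ≤ numLeaves t := h.2.1.le h.1

section Letters

variable {A : Type*} [Ring A]

open Classical in
/-- The letters of `w` at the positions satisfying `P`. -/
noncomputable def select (P : ℕ → Prop) (w : List A) : List A :=
  ((List.range w.length).filter fun i => P i).map fun i => w.getD i 0

theorem select_congr {P Q : ℕ → Prop} {w : List A} (h : ∀ i < w.length, P i ↔ Q i) :
    select P w = select Q w := by
  unfold select
  congr 1
  exact List.filter_congr fun i hi => by simp [h i (List.mem_range.1 hi)]

theorem select_eq_nil {P : ℕ → Prop} {w : List A} (h : ∀ i < w.length, ¬ P i) :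
    select P w = [] := by
  rw [select, List.map_eq_nil_iff, List.filter_eq_nil_iff]
  intro i hi
  simpa using h i (List.mem_range.1 hi)

theorem select_append (P : ℕ → Prop) (u v : List A) :
    select P (u ++ v) = select P u ++ select (fun i => P (u.length + i)) v := by
  unfold select
  rw [List.length_append, List.range_add, List.filter_append, List.map_append, List.filter_map,
    List.map_map]
  congr 1
  · refine List.map_congr_left fun i hi => ?_
    rw [List.getD_append]
    exact List.mem_range.1 (List.mem_filter.1 hi).1
  · refine List.map_congr_left fun i hi => ?_
    simp [List.getElem?_append_right]

theorem select_singleton {P : ℕ → Prop} (s : A) (h : P 0) : select P [s] = [s] := by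
  simp [select, h]

theorem select_singleton_of_not {P : ℕ → Prop} (s : A) (h : ¬ P 0) : select P [s] = [] := by
  simp [select, h]

theorem select_three (P : ℕ → Prop) (u r : List A) (s : A) :
    select P (u ++ s :: r) = select P u ++ (select (fun i => P (u.length + i)) [s] ++
      select (fun i => P (u.length + 1 + i)) r) := by
  rw [select_append, ← List.singleton_append, select_append]
  simp [add_assoc]

/-- The letters of `w` in the sectors of the root of `node cs`. -/
noncomputable def rootLetters (cs : List PTree) (w : List A) : List A :=
  select (OwnsSector (node cs) []) w

/-- The product of `φ` over the internal vertices of a forest. -/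
noncomputable def forestPhi (φ : A → ℂ) (cs : List PTree) (w : List A) : ℂ :=
  ∏ᶠ v ∈ {v | v ≠ [] ∧ IsInternalAt (node cs) v}, φ (select (OwnsSector (node cs) v) w).prod

theorem phiPi_eq (φ : A → ℂ) (t : PTree) (w : List A) :
    phiPi φ t w = ∏ᶠ v ∈ {v | IsInternalAt t v}, φ (select (OwnsSector t v) w).prod := rfl

theorem finite_forest_internal (cs : List PTree) :
    {v | v ≠ [] ∧ IsInternalAt (node cs) v}.Finite :=
  (finite_isInternalAt _).subset fun _ h => h.2

theorem phiPi_leaf (φ : A → ℂ) (w : List A) : phiPi φ leaf w = 1 := by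
  rw [phiPi_eq]
  simp [leaf, not_isInternalAt_node_nil]

theorem phiPi_node (φ : A → ℂ) {cs : List PTree} (hcs : cs ≠ []) (w : List A) :
    phiPi φ (node cs) w = φ (rootLetters cs w).prod * forestPhi φ cs w := by
  have hset : {v | IsInternalAt (node cs) v} =
      insert [] {v | v ≠ [] ∧ IsInternalAt (node cs) v} := by
    ext v
    by_cases hv : v = []
    · simp [hv, isInternalAt_nil, hcs]
    · simp [hv]
  rw [phiPi_eq, hset, finprod_mem_insert _ (by simp) (finite_forest_internal cs)]
  rfl

theorem forestPhi_cons (φ : A → ℂ) (c : PTree) (cs : List PTree) (w : List A) :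
    forestPhi φ (c :: cs) w =
      (∏ᶠ p ∈ {p | IsInternalAt c p}, φ (select (OwnsSector c p) w).prod) *
      ∏ᶠ q ∈ {q | q ≠ [] ∧ IsInternalAt (node cs) q},
        φ (select (fun j => numLeaves c ≤ j ∧ OwnsSector (node cs) q (j - numLeaves c)) w).prod := by
  rw [forestPhi, finprod_mem_path_split _ (finite_forest_internal _)]
  congr 1
  · simp only [isInternalAt_cons_zero]
    refine finprod_mem_congr rfl fun p _ => ?_
    rw [select_congr fun i _ => ownsSector_cons_zero c cs p i]
  · refine finprod_mem_congr ?_ fun q hq => ?_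
    · ext q
      exact and_congr_right fun hq => isInternalAt_cons_bump c cs hq
    · rw [select_congr fun i _ => ownsSector_cons_bump c hq.1 i]

theorem forestPhi_singleton (φ : A → ℂ) (c : PTree) (w : List A) :
    forestPhi φ [c] w = phiPi φ c w := by
  rw [forestPhi_cons, phiPi_eq]
  simp [not_isInternalAt_node_nil]

theorem rootLetters_singleton (c : PTree) (w : List A) : rootLetters [c] w = [] :=
  select_eq_nil fun _ _ => not_ownsSector_singleton_nil c _

theorem forestPhi_cons_append (φ : A → ℂ) {c : PTree} (cs : List PTree)
    {u : List A} (hu : u.length + 1 = numLeaves c) (s : A) (r : List A) :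
    forestPhi φ (c :: cs) (u ++ s :: r) = phiPi φ c u * forestPhi φ cs r := by
  rw [forestPhi_cons, phiPi_eq, forestPhi]
  congr 1
  · refine finprod_mem_congr rfl fun p _ => ?_
    rw [select_three, select_singleton_of_not, select_eq_nil (w := r), List.append_nil,
      List.append_nil]
    · intro i _ h
      have := h.le
      omega
    · intro h
      have := h.le
      omega
  · refine finprod_mem_congr rfl fun q _ => ?_
    rw [select_three, select_eq_nil (w := u), select_singleton_of_not, List.nil_append,
      List.nil_append]
    · rw [select_congr]
      intro i _
      simp [hu]
    · omega
    · intro i hi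
      omega

theorem rootLetters_cons_append {c : PTree} {cs : List PTree} (hcs : cs ≠ [])
    {u : List A} (hu : u.length + 1 = numLeaves c) (s : A) (r : List A) :
    rootLetters (c :: cs) (u ++ s :: r) = s :: rootLetters cs r := by
  rw [rootLetters, select_three, select_eq_nil (w := u), select_singleton, rootLetters,
    List.nil_append, List.singleton_append]
  · rw [select_congr]
    intro i _
    rw [ownsSector_nil_of_le c hcs (by omega), hu, Nat.add_sub_cancel_left]
  · exact ownsSector_nil_middle c hcs (by omega)
  · intro i hi
    exact not_ownsSector_nil_of_lt c cs (by omega)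

end Letters

section Skeleton

/-- Strict ancestor order on a set of vertices given by paths. -/
def Ancestor (R : List ℕ → Prop) (v w : {p // R p}) : Prop := v.1 <+: w.1 ∧ v ≠ w

/-- Strictly increasing labellings of the skeleton of `t` by `Fin N`. -/
noncomputable def skelCount (t : PTree) (N : ℕ) : ℕ := strictCount (Ancestor (IsInternalAt t)) N

/-- Strictly increasing labellings of the skeletons of a forest by `Fin N`. -/
noncomputable def forestCount (cs : List PTree) (N : ℕ) : ℕ :=
  strictCount (Ancestor fun q => q ≠ [] ∧ IsInternalAt (node cs) q) N

theorem strictCount_ancestor_congr {R S : List ℕ → Prop} (h : ∀ p, R p ↔ S p) (N : ℕ) :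
    strictCount (Ancestor R) N = strictCount (Ancestor S) N := by
  obtain rfl : R = S := funext fun p => propext (h p)
  rfl

theorem skelCount_leaf (N : ℕ) : skelCount leaf N = 1 := by
  have : IsEmpty {p // IsInternalAt leaf p} := ⟨fun p => not_isInternalAt_node_nil p.2⟩
  exact strictCount_of_isEmpty _ N

theorem skelCount_node_zero {cs : List PTree} (hcs : cs ≠ []) : skelCount (node cs) 0 = 0 := by
  have : Nonempty {p // IsInternalAt (node cs) p} := ⟨⟨[], isInternalAt_nil.2 hcs⟩⟩
  exact strictCount_zero _

theorem forestCount_nil (N : ℕ) : forestCount [] N = 1 := by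
  have : IsEmpty {q // q ≠ [] ∧ IsInternalAt (node []) q} :=
    ⟨fun p => not_isInternalAt_node_nil p.2.2⟩
  exact strictCount_of_isEmpty _ N

theorem pathSplit_inl_val (R : List ℕ → Prop) (p : {p // R (0 :: p)}) :
    (pathSplit R (.inl p)).1 = 0 :: p.1 := rfl

theorem pathSplit_inr_val (R : List ℕ → Prop) (q : {q // q ≠ [] ∧ R (bump q)}) :
    (pathSplit R (.inr q)).1 = bump q.1 := rfl

theorem forestCount_cons (c : PTree) (cs : List PTree) (N : ℕ) :
    forestCount (c :: cs) N = skelCount c N * forestCount cs N := by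
  rw [forestCount, ← strictCount_congr (r := fun x y =>
    Ancestor _ (pathSplit (IsInternalAt (node (c :: cs))) x) (pathSplit _ y))
    (pathSplit (IsInternalAt (node (c :: cs)))) (fun _ _ => Iff.rfl), strictCount_sum]
  · congr 1
    · rw [skelCount, ← strictCount_ancestor_congr (isInternalAt_cons_zero c cs)]
      refine strictCount_congr (Equiv.refl _) (fun v w => ?_) N
      simp [Ancestor, pathSplit_inl_val, List.cons_prefix_cons, Subtype.ext_iff]
    · rw [forestCount, ← strictCount_ancestor_congr fun q => and_congr_right fun hq =>
        isInternalAt_cons_bump c cs hq]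
      refine strictCount_congr (Equiv.refl _) (fun v w => ?_) N
      simp [Ancestor, pathSplit_inr_val, bump_prefix_bump, Subtype.ext_iff]
  · exact fun x y h => not_zero_prefix_bump h.1
  · exact fun x y h => not_bump_prefix_zero x.2.1 h.1

/-- The vertices of a tree are its root and its other vertices. -/
noncomputable def rootSplit {R : List ℕ → Prop} (hR : R []) :
    Option {q // q ≠ [] ∧ R q} ≃ {q // R q} :=
  Equiv.ofBijective (fun x => x.elim ⟨[], hR⟩ fun q => ⟨q.1, q.2.2⟩) <| by
    constructor
    · rintro (_ | ⟨p, hp⟩) (_ | ⟨q, hq⟩) h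
      · rfl
      · exact absurd (congrArg Subtype.val h).symm hq.1
      · exact absurd (congrArg Subtype.val h) hp.1
      · have h : p = q := congrArg Subtype.val h
        subst h
        rfl
    · rintro ⟨q, hq⟩
      by_cases h : q = []
      · subst h
        exact ⟨none, rfl⟩
      · exact ⟨some ⟨q, h, hq⟩, rfl⟩

theorem rootSplit_some_val {R : List ℕ → Prop} (hR : R []) (q : {q // q ≠ [] ∧ R q}) :
    (rootSplit hR (some q)).1 = q.1 := rfl

theorem skelCount_node_succ {cs : List PTree} (hcs : cs ≠ []) (N : ℕ) :
    skelCount (node cs) (N + 1) = skelCount (node cs) N + forestCount cs N := by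
  have hfin : Finite {q // q ≠ [] ∧ IsInternalAt (node cs) q} := finite_forest_internal cs
  have h := fun N => strictCount_congr (r := fun x y =>
    Ancestor _ (rootSplit (isInternalAt_nil.2 hcs) x) (rootSplit (isInternalAt_nil.2 hcs) y))
    (rootSplit (isInternalAt_nil.2 hcs)) (fun _ _ => Iff.rfl) N
  rw [skelCount, skelCount, ← h, ← h, strictCount_option_succ]
  · congr 1
    refine strictCount_congr (Equiv.refl _) (fun v w => ?_) N
    simp [Ancestor, rootSplit_some_val, Subtype.ext_iff]
  · intro x
    refine ⟨List.nil_prefix, fun h => ?_⟩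
    exact x.2.1 (congrArg Subtype.val h).symm
  · rintro x ⟨h₁, h₂⟩
    exact h₂ (Subtype.ext (List.prefix_nil.1 h₁))

end Skeleton
section SchroderForests

/-- Nonempty forests of Schröder trees with `m + 1` leaves. -/
def schroderForests (m : ℕ) : Set (List PTree) :=
  {cs | cs ≠ [] ∧ (∀ c ∈ cs, IsSchroder c) ∧ (cs.map numLeaves).sum = m + 1}

/-- Forests of at least two Schröder trees with `m + 1` leaves. -/
def schroderChildren (m : ℕ) : Set (List PTree) := {cs ∈ schroderForests m | 2 ≤ cs.length}

theorem schroderForests_eq (m : ℕ) :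
    schroderForests m = (fun c => [c]) '' ST m ∪ schroderChildren m := by
  ext cs
  simp only [schroderForests, schroderChildren, ST, Set.mem_union, Set.mem_image,
    Set.mem_ofPred_eq]
  rcases cs with _ | ⟨c, _ | ⟨d, cs⟩⟩ <;> simp

theorem mem_schroderChildren_cons {m : ℕ} {c : PTree} {cs : List PTree} :
    c :: cs ∈ schroderChildren m ↔
      ∃ j < m, c ∈ ST j ∧ cs ∈ schroderForests (m - j - 1) := by
  simp only [schroderForests, schroderChildren, ST, Set.mem_ofPred_eq]
  constructor
  · rintro ⟨⟨-, h₁, h₂⟩, h₃⟩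
    obtain ⟨d, ds, rfl⟩ : ∃ d ds, cs = d :: ds := by
      cases cs with
      | nil => simp at h₃
      | cons d ds => exact ⟨d, ds, rfl⟩
    have hc := numLeaves_pos c
    have hd := numLeaves_pos d
    simp only [List.map_cons, List.sum_cons] at h₂ ⊢
    refine ⟨numLeaves c - 1, by omega, ⟨h₁ c (by simp), by omega⟩, by simp,
      fun x hx => h₁ x (by simp [hx]), by omega⟩
  · rintro ⟨j, hj, ⟨h₁, h₂⟩, h₃, h₄, h₅⟩
    refine ⟨⟨by simp, ?_, ?_⟩, ?_⟩
    · simpa [h₁] using h₄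
    · simp only [List.map_cons, List.sum_cons]
      omega
    · have := List.length_pos_iff.2 h₃
      simp only [List.length_cons]
      omega

theorem ST_zero : ST 0 = {leaf} := by
  ext t
  simp only [ST, Set.mem_ofPred_eq, Set.mem_singleton_iff]
  constructor
  · rintro ⟨h, h₁⟩
    cases h with
    | leaf => rfl
    | node cs h₂ h₃ =>
      exfalso
      rcases cs with _ | ⟨c, _ | ⟨d, cs⟩⟩
      · simp at h₂
      · simp at h₂
      · rw [numLeaves_node (by simp)] at h₁
        have := numLeaves_pos c
        have := numLeaves_pos d
        simp only [List.map_cons, List.sum_cons] at h₁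
        omega
  · rintro rfl
    exact ⟨.leaf, numLeaves_leaf⟩

theorem ST_eq_image {m : ℕ} (hm : m ≠ 0) : ST m = node '' schroderChildren m := by
  ext t
  simp only [ST, schroderChildren, schroderForests, Set.mem_ofPred_eq, Set.mem_image]
  constructor
  · rintro ⟨h, h₁⟩
    cases h with
    | leaf => exact absurd (numLeaves_leaf.symm.trans h₁) (by omega)
    | node cs h₂ h₃ =>
      have hcs : cs ≠ [] := by
        rintro rfl
        simp at h₂
      exact ⟨cs, ⟨⟨hcs, h₃, by rw [← numLeaves_node hcs, h₁]⟩, h₂⟩, rfl⟩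
  · rintro ⟨cs, ⟨⟨hcs, h₁, h₂⟩, h₃⟩, rfl⟩
    exact ⟨.node cs h₃ h₁, by rw [numLeaves_node hcs, h₂]⟩

theorem finite_schroder (m : ℕ) :
    (ST m).Finite ∧ (schroderForests m).Finite ∧ (schroderChildren m).Finite := by
  induction m using Nat.strong_induction_on with
  | _ m ih =>
    have hch : (schroderChildren m).Finite := by
      refine Set.Finite.subset (Set.Finite.biUnion (Set.finite_lt_nat m) fun j hj =>
        ((ih j hj).1.prod (ih (m - j - 1) ?_).2.1).image fun p => p.1 :: p.2) ?_
      · have : j < m := hj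
        omega
      · rintro (_ | ⟨c, cs⟩) h
        · simp [schroderChildren] at h
        · obtain ⟨j, hj, h₁, h₂⟩ := mem_schroderChildren_cons.1 h
          exact Set.mem_biUnion hj ⟨(c, cs), ⟨h₁, h₂⟩, rfl⟩
    have hST : (ST m).Finite := by
      by_cases hm : m = 0
      · rw [hm, ST_zero]
        exact Set.finite_singleton _
      · rw [ST_eq_image hm]
        exact hch.image _
    refine ⟨hST, ?_, hch⟩
    rw [schroderForests_eq]
    exact (hST.image _).union hch

/-- The Schröder trees with `m + 1` leaves as a `Finset`. -/
noncomputable def treesFinset (m : ℕ) : Finset PTree := (finite_schroder m).1.toFinset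

/-- The Schröder forests with `m + 1` leaves as a `Finset`. -/
noncomputable def forestsFinset (m : ℕ) : Finset (List PTree) := (finite_schroder m).2.1.toFinset

/-- The forests of at least two Schröder trees with `m + 1` leaves as a `Finset`. -/
noncomputable def childrenFinset (m : ℕ) : Finset (List PTree) :=
  (finite_schroder m).2.2.toFinset

theorem mem_treesFinset {m : ℕ} {t : PTree} : t ∈ treesFinset m ↔ t ∈ ST m := by
  simp [treesFinset]

theorem mem_forestsFinset {m : ℕ} {cs : List PTree} :
    cs ∈ forestsFinset m ↔ cs ∈ schroderForests m := by
  simp [forestsFinset]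

theorem mem_childrenFinset {m : ℕ} {cs : List PTree} :
    cs ∈ childrenFinset m ↔ cs ∈ schroderChildren m := by
  simp [childrenFinset]

theorem sum_forestsFinset (m : ℕ) (f : List PTree → ℂ) :
    ∑ cs ∈ forestsFinset m, f cs = ∑ c ∈ treesFinset m, f [c] + ∑ cs ∈ childrenFinset m, f cs := by
  classical
  have h : forestsFinset m = (treesFinset m).image (fun c => [c]) ∪ childrenFinset m := by
    ext cs
    rw [mem_forestsFinset, schroderForests_eq]
    simp [mem_treesFinset, mem_childrenFinset]
  rw [h, Finset.sum_union, Finset.sum_image]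
  · intro c _ d _ h
    simpa using h
  · rw [Finset.disjoint_left]
    intro cs h₁ h₂
    obtain ⟨c, -, rfl⟩ := Finset.mem_image.1 h₁
    simpa using (mem_childrenFinset.1 h₂).2

theorem sum_childrenFinset (m : ℕ) (f : List PTree → ℂ) :
    ∑ cs ∈ childrenFinset m, f cs = ∑ j ∈ Finset.range m, ∑ c ∈ treesFinset j,
      ∑ cs ∈ forestsFinset (m - j - 1), f (c :: cs) := by
  simp_rw [← Finset.sum_product', Finset.sum_sigma']
  symm
  refine Finset.sum_bij (fun x _ => x.2.1 :: x.2.2) ?_ ?_ ?_ fun _ _ => rfl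
  · rintro ⟨j, c, cs⟩ h
    simp only [Finset.mem_sigma, Finset.mem_product, Finset.mem_range, mem_treesFinset,
      mem_forestsFinset] at h
    exact mem_childrenFinset.2 (mem_schroderChildren_cons.2 ⟨j, h⟩)
  · rintro ⟨j, c, cs⟩ h ⟨j', c', cs'⟩ h' heq
    simp only [Finset.mem_sigma, Finset.mem_product, mem_treesFinset] at h h'
    simp only [List.cons.injEq] at heq
    obtain ⟨rfl, rfl⟩ := heq
    obtain rfl : j = j' := by
      have h₁ := h.2.1.2
      have h₂ := h'.2.1.2
      omega
    rfl
  · rintro (_ | ⟨c, cs⟩) h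
    · simp [mem_childrenFinset, schroderChildren] at h
    · obtain ⟨j, hj⟩ := mem_schroderChildren_cons.1 (mem_childrenFinset.1 h)
      exact ⟨⟨j, c, cs⟩, by simpa [mem_treesFinset, mem_forestsFinset] using hj, rfl⟩

theorem sum_treesFinset {m : ℕ} (hm : m ≠ 0) (f : PTree → ℂ) :
    ∑ t ∈ treesFinset m, f t = ∑ cs ∈ childrenFinset m, f (node cs) := by
  classical
  have h : treesFinset m = (childrenFinset m).image node := by
    ext t
    rw [mem_treesFinset, ST_eq_image hm]
    simp [mem_childrenFinset]
  rw [h, Finset.sum_image]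
  intro c _ d _ h
  simpa using h

theorem treesFinset_zero : treesFinset 0 = {leaf} := by
  ext t
  rw [mem_treesFinset, ST_zero]
  simp

theorem childrenFinset_ne_nil {m : ℕ} {cs : List PTree} (h : cs ∈ childrenFinset m) : cs ≠ [] :=
  (mem_childrenFinset.1 h).1.1

variable {A : Type*} [Ring A]

/-- Schröder trees weighted by their strict labellings by `Fin N`. -/
noncomputable def treeSum (φ : A → ℂ) (N : ℕ) (w : List A) : ℂ :=
  ∑ t ∈ treesFinset w.length, (skelCount t N : ℂ) * phiPi φ t w

theorem treeSum_nil (φ : A → ℂ) (N : ℕ) : treeSum φ N [] = 1 := by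
  rw [treeSum, List.length_nil, treesFinset_zero, Finset.sum_singleton, skelCount_leaf, phiPi_leaf]
  simp

theorem treeSum_zero (φ : A → ℂ) (w : List A) : treeSum φ 0 w = emptyWord w := by
  cases w with
  | nil => rw [treeSum_nil]; rfl
  | cons a w =>
    rw [treeSum, sum_treesFinset (by simp)]
    refine Finset.sum_eq_zero fun cs hcs => ?_
    rw [skelCount_node_zero (childrenFinset_ne_nil hcs)]
    simp

theorem forest_sum_eq_gapConv (φ : A → ℂ) (N : ℕ) (w : List A) (F : List A → ℂ) :
    ∑ cs ∈ forestsFinset w.length,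
      (forestCount cs N : ℂ) * (F (rootLetters cs w) * forestPhi φ cs w) =
    gapConv F (treeSum φ N) w := by
  induction hm : w.length using Nat.strong_induction_on generalizing w F with
  | _ m ih =>
    rw [gapConv, gapSum_append_eq, sum_forestsFinset, sum_childrenFinset]
    congr 1
    · rw [treeSum, hm, Finset.mul_sum]
      refine Finset.sum_congr rfl fun c _ => ?_
      rw [forestCount_cons, forestCount_nil, rootLetters_singleton, forestPhi_singleton, mul_one]
      ring
    · rw [hm]
      refine Finset.sum_congr rfl fun j hj => ?_
      rw [Finset.mem_range] at hj
      have hjw : j < w.length := hm.symm ▸ hj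
      rw [← ih (m - j - 1) (by omega) (w.drop (j + 1)) _ (by rw [List.length_drop]; omega), treeSum,
        List.length_take, min_eq_left hjw.le, Finset.sum_mul_sum]
      refine Finset.sum_congr rfl fun c hc => Finset.sum_congr rfl fun cs hcs => ?_
      have hu : (w.take j).length + 1 = numLeaves c := by
        rw [List.length_take, min_eq_left hjw.le, (mem_treesFinset.1 hc).2]
      have hw : w = w.take j ++ w[j] :: w.drop (j + 1) := by
        rw [← List.drop_eq_getElem_cons hjw, List.take_append_drop]
      have hs : (w.drop j).take 1 = [w[j]] := by
        rw [List.drop_eq_getElem_cons hjw]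
        rfl
      have h₁ := rootLetters_cons_append (mem_forestsFinset.1 hcs).1 hu w[j] (w.drop (j + 1))
      have h₂ := forestPhi_cons_append φ cs hu w[j] (w.drop (j + 1))
      rw [← hw] at h₁ h₂
      rw [h₁, h₂, forestCount_cons, hs]
      push_cast
      rw [List.singleton_append]
      ring

theorem treeSum_succ {φ : A → ℂ} (hφ : φ 1 = 1) (N : ℕ) (w : List A) :
    treeSum φ (N + 1) w = gapConv (fun u => φ u.prod) (treeSum φ N) w := by
  cases w with
  | nil => simp [gapConv, gapSum, treeSum_nil, hφ]
  | cons a w =>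
    rw [← forest_sum_eq_gapConv, sum_forestsFinset, treeSum, sum_treesFinset (by simp)]
    have h : ∀ cs ∈ childrenFinset (a :: w).length,
        (skelCount (node cs) (N + 1) : ℂ) * phiPi φ (node cs) (a :: w) =
        (skelCount (node cs) N : ℂ) * phiPi φ (node cs) (a :: w) + (forestCount cs N : ℂ) *
          (φ (rootLetters cs (a :: w)).prod * forestPhi φ cs (a :: w)) := by
      intro cs hcs
      have hcs := childrenFinset_ne_nil hcs
      rw [skelCount_node_succ hcs, ← phiPi_node φ hcs]
      push_cast
      ring
    rw [Finset.sum_congr rfl h, Finset.sum_add_distrib]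
    congr 1
    rw [← sum_treesFinset (by simp) fun t => (skelCount t N : ℂ) * phiPi φ t (a :: w)]
    refine Finset.sum_congr rfl fun c _ => ?_
    rw [forestCount_cons, forestCount_nil, rootLetters_singleton, forestPhi_singleton]
    simp [hφ]

end SchroderForests

end PTree

end Paths
theorem eval_natCast_eq_treeSum {A : Type*} [Ring A] {φ : A → ℂ} (hφ : φ 1 = 1) {h : List A → ℂ}
    (hmc : MonotoneMC φ h) {H : List A → ℂ} {M : List A → Polynomial ℂ} (hH : H [] = 0)
    (hM : IsGeneratedBy H M) (hh : ∀ u, u ≠ [] → h u = H u) (N : ℕ) (w : List A) :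
    (M w).eval (N : ℂ) = PTree.treeSum φ N w := by
  induction N generalizing w with
  | zero => rw [Nat.cast_zero, hM.eval_zero_eq, PTree.treeSum_zero]
  | succ N ih =>
    rw [PTree.treeSum_succ hφ, Nat.cast_succ, add_comm, hM.eval_add hH]
    simp only [ih, hM.eval_one_eq hφ hmc hH hh]

/-- The polynomial whose value at `N` counts the strict labellings of the skeleton by `Fin N`. -/
noncomputable def skelPoly (t : PTree) : Polynomial ℂ :=
  ∑ k ∈ Finset.range (PTree.numInternal t + 1),
    Polynomial.C (PTree.omegaSkK t k : ℂ) * binomPoly k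

theorem omegaSkK_eq (t : PTree) (k : ℕ) :
    PTree.omegaSkK t k = strictSurjCount (PTree.Ancestor (PTree.IsInternalAt t)) k := by
  rw [PTree.omegaSkK, strictSurjCount]
  simp only [PTree.Ancestor, and_imp]

theorem eval_natCast_skelPoly (t : PTree) (N : ℕ) :
    (skelPoly t).eval (N : ℂ) = PTree.skelCount t N := by
  have : Finite {p // PTree.IsInternalAt t p} := PTree.finite_isInternalAt t
  rw [PTree.skelCount, strictCount_eq_sum_choose, skelPoly, Polynomial.eval_finsetSum,
    PTree.numInternal]
  push_cast
  refine Finset.sum_congr rfl fun k _ => ?_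
  rw [Polynomial.eval_mul, Polynomial.eval_C, eval_natCast_binomPoly, omegaSkK_eq, mul_comm]

theorem coeff_one_skelPoly (t : PTree) : (skelPoly t).coeff 1 = PTree.omegaSk t := by
  rw [skelPoly, Polynomial.finsetSum_coeff, Finset.sum_range_succ', PTree.omegaSk,
    Polynomial.coeff_C_mul, coeff_one_binomPoly_zero, mul_zero, add_zero,
    Finset.range_eq_Ico, Finset.sum_Ico_add' (fun k => (Polynomial.C (PTree.omegaSkK t k : ℂ) *
      binomPoly k).coeff 1) 0 _ 1]
  refine Finset.sum_congr (by ext; simp) fun k hk => ?_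
  obtain ⟨k, rfl⟩ := Nat.exists_eq_add_of_le' (Finset.mem_Icc.1 hk).1
  rw [Polynomial.coeff_C_mul, coeff_one_binomPoly_succ, pow_add]
  push_cast
  ring

/-- Let `(A, φ)` be a noncommutative probability space with monotone
cumulants `{h_n}`. Then for every `n ≥ 1` and all `a_1, …, a_n ∈ A`,
`h_n(a_1,…,a_n) = Σ_{t ∈ ST(n)} ω(sk(t)) · φ_{π(t)}(a_1,…,a_n)`. -/
theorem monotone_cumulants_eq_sum_schroder_trees
    (A : Type*) [Ring A] [Algebra ℂ A] (φ : A →ₗ[ℂ] ℂ) (hφ : φ 1 = 1)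
    (h : List A → ℂ) (hmc : MonotoneMC (fun x => φ x) h)
    (n : ℕ) (hn : 1 ≤ n) (a : Fin n → A) :
    h (List.ofFn a) =
      ∑ᶠ t ∈ PTree.ST n, PTree.omegaSk t * PTree.phiPi (fun x => φ x) t (List.ofFn a) := by
  classical
  set H : List A → ℂ := fun u => if u = [] then 0 else h u with hHdef
  have hH : H [] = 0 := by simp [hHdef]
  have hh : ∀ u, u ≠ [] → h u = H u := fun u hu => by simp [hHdef, hu]
  obtain ⟨M, hM⟩ := exists_isGeneratedBy H hH
  have hlen : (List.ofFn a).length = n := List.length_ofFn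
  have hne : List.ofFn a ≠ [] := by
    rw [Ne, ← List.length_eq_zero_iff, hlen]
    omega
  have hpoly : M (List.ofFn a) = ∑ t ∈ PTree.treesFinset n,
      skelPoly t * Polynomial.C (PTree.phiPi (fun x => φ x) t (List.ofFn a)) := by
    refine Polynomial.eq_of_infinite_eval_eq _ _
      ((Set.infinite_range_of_injective (Nat.cast_injective (R := ℂ))).mono ?_)
    rintro _ ⟨N, rfl⟩
    rw [Set.mem_ofPred_eq, eval_natCast_eq_treeSum hφ hmc hH hM hh, PTree.treeSum, hlen,
      Polynomial.eval_finsetSum]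
    simp only [Polynomial.eval_mul, Polynomial.eval_C, eval_natCast_skelPoly]
  rw [hh _ hne, ← hM.coeff_one, hpoly, Polynomial.finsetSum_coeff,
    finsum_mem_eq_finite_toFinset_sum _ (PTree.finite_schroder n).1]
  refine Finset.sum_congr rfl fun t _ => ?_
  rw [Polynomial.coeff_mul_C, coeff_one_skelPoly]
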